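/- arXiv:1101.3135 — 7 statements merged into one kernel-verified Lean document; each statement's English description precedes it below -/
import Mathlib

section
/- For every positive integer n and every complex number t with |t| < 1, the series Σ_{k=1}^∞ k^n t^k converges and equals t·A_n(t)/(1−t)^{n+1}, where A_n is the Eulerian polynomial. -/
open Polynomial

noncomputable section

/-- The Eulerian number `A(n,m) = ∑_{ℓ=0}^{m} (−1)^ℓ C(n+1,ℓ) (m−ℓ)^n`. -/
def eulerianNum (n m : ℕ) : ℝ :=
  ∑ ℓ ∈ Finset.range (m + 1), (-1 : ℝ) ^ ℓ * ((n + 1).choose ℓ) * ((m - ℓ : ℕ) : ℝ) ^ n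

/-- The Eulerian polynomial `A_n(t) = ∑_{j=0}^{n−1} A(n,j+1) t^j`. -/
def eulerianPoly (n : ℕ) : Polynomial ℝ :=
  ∑ j ∈ Finset.range n, C (eulerianNum n (j + 1)) * X ^ j

/-!
Multiplying a formal power series by `(1 - X) ^ (n + 1)` takes the `(n + 1)`-st backward difference
of its coefficients. Applied to `∑ k ^ n X ^ k`, this gives the Eulerian numbers `A(n, m)` by their
very definition. They vanish for `m > n`, because the `(n + 1)`-st difference of a polynomial of
degree `n` is zero, so the product is the polynomial `X * A_n`. As multiplication by a polynomial is
compatible with summing a power series at a point, evaluation at `t` gives the closed form.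
-/

open scoped PowerSeries

theorem sum_neg_one_pow_mul_choose_mul_sub_pow_eq_zero {R : Type*} [CommRing R] {j N : ℕ}
    (h : j < N) (x : R) :
    ∑ l ∈ Finset.range (N + 1), (-1) ^ l * (N.choose l : R) * (x - l) ^ j = 0 := by
  have hdiff := congrFun (fwdDiff_iter_pow_eq_zero_of_lt (R := R) h) (x - N)
  rw [fwdDiff_iter_eq_sum_shift, Pi.zero_apply] at hdiff
  rw [← hdiff, ← Finset.sum_range_reflect]
  refine Finset.sum_congr rfl fun k hk => ?_
  have hkN : k ≤ N := Finset.mem_range_succ_iff.mp hk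
  rw [Nat.add_sub_cancel, Nat.choose_symm hkN, Nat.cast_sub hkN]
  simp [zsmul_eq_mul, sub_add]

theorem eulerianNum_eq_zero_of_lt {n m : ℕ} (h : n < m) : eulerianNum n m = 0 := by
  rw [eulerianNum, ← sum_neg_one_pow_mul_choose_mul_sub_pow_eq_zero n.lt_succ_self (m : ℝ)]
  symm
  apply Finset.sum_subset_zero_on_sdiff (Finset.range_mono (by omega))
  · intro l hl
    have hnl : n + 1 < l := by
      simp only [Finset.mem_sdiff, Finset.mem_range] at hl
      omega
    rw [Nat.choose_eq_zero_of_lt hnl, Nat.cast_zero, mul_zero, zero_mul]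
  · intro l hl
    have hlm : l ≤ m := (Finset.mem_range_succ_iff.mp hl).trans h
    rw [Nat.cast_sub hlm]

theorem eulerianNum_zero_right {n : ℕ} (hn : n ≠ 0) : eulerianNum n 0 = 0 := by
  simp [eulerianNum, hn]

theorem coeff_X_mul_eulerianPoly {n : ℕ} (hn : n ≠ 0) (m : ℕ) :
    (X * eulerianPoly n).coeff m = eulerianNum n m := by
  cases m with
  | zero => rw [coeff_X_mul_zero, eulerianNum_zero_right hn]
  | succ m =>
    rw [coeff_X_mul, eulerianPoly, finsetSum_coeff]
    simp only [coeff_C_mul_X_pow, Finset.sum_ite_eq, Finset.mem_range, ite_eq_left_iff, not_lt]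
    exact fun h => (eulerianNum_eq_zero_of_lt (Nat.lt_succ_of_le h)).symm

theorem coeff_one_sub_X_pow (R : Type*) [CommRing R] (N l : ℕ) :
    ((1 - X : R[X]) ^ N).coeff l = (-1) ^ l * N.choose l := by
  have hcomp : (1 - X : R[X]) ^ N = ((1 + X) ^ N).comp (C (-1) * X) := by
    simp [sub_eq_add_neg]
  rw [hcomp, comp_C_mul_X_coeff, coeff_one_add_X_pow, mul_comm]

theorem one_sub_X_pow_mul_mk_pow {n : ℕ} (hn : n ≠ 0) :
    (((1 - X) ^ (n + 1) : ℝ[X]) : ℝ⟦X⟧) * PowerSeries.mk (fun k : ℕ => (k : ℝ) ^ n) =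
      (X * eulerianPoly n : ℝ[X]) := by
  ext m
  rw [coeff_coe, coeff_X_mul_eulerianPoly hn, PowerSeries.coeff_mul,
    Finset.Nat.sum_antidiagonal_eq_sum_range_succ_mk]
  simp only [coeff_coe, coeff_one_sub_X_pow, PowerSeries.coeff_mk, eulerianNum]

section HasSum

variable {R A : Type*} [CommSemiring R] [Semiring A] [Algebra R A] [TopologicalSpace A]

theorem hasSum_coeff_smul_pow (p : R[X]) (t : A) :
    HasSum (fun k => p.coeff k • t ^ k) (aeval t p) := by
  rw [aeval_eq_sum_range]
  exact hasSum_sum_of_ne_finset_zero fun k hk => by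
    rw [coeff_eq_zero_of_natDegree_lt (by simpa using hk), zero_smul]

variable [IsTopologicalSemiring A] {f : R⟦X⟧} {t s : A}

theorem hasSum_coeff_X_mul_smul_pow (h : HasSum (fun k => f.coeff k • t ^ k) s) :
    HasSum (fun k => (PowerSeries.X * f).coeff k • t ^ k) (t * s) := by
  have hzero (k : ℕ) (hk : k ∉ Set.range Nat.succ) :
      (PowerSeries.X * f).coeff k • t ^ k = 0 := by
    obtain rfl : k = 0 := by simpa using hk
    rw [PowerSeries.coeff_zero_X_mul, zero_smul]
  rw [← Nat.succ_injective.hasSum_iff hzero]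
  simpa only [Function.comp_def, Nat.succ_eq_add_one, PowerSeries.coeff_succ_X_mul, pow_succ',
    mul_smul_comm] using h.mul_left t

theorem hasSum_coeff_coe_mul_smul_pow (p : R[X]) (h : HasSum (fun k => f.coeff k • t ^ k) s) :
    HasSum (fun k => ((p : R⟦X⟧) * f).coeff k • t ^ k) (aeval t p * s) := by
  induction p using Polynomial.induction_on with
  | C a =>
    simpa only [coe_C, PowerSeries.coeff_C_mul, mul_smul, ← Algebra.smul_def, aeval_C] using
      h.mul_left (algebraMap R A a)
  | add p q hp hq =>
    simpa only [coe_add, add_mul, map_add, add_smul] using hp.add hq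
  | monomial n a ih =>
    have hpow : C a * X ^ (n + 1) = X * (C a * X ^ n) := by rw [pow_succ', mul_left_comm]
    rw [hpow, coe_mul, coe_X, mul_assoc, map_mul, aeval_X, mul_assoc]
    exact hasSum_coeff_X_mul_smul_pow ih

end HasSum

theorem statement0_general {A : Type*} [NormedRing A] [HasSummableGeomSeries A] [Algebra ℝ A]
    {n : ℕ} (hn : n ≠ 0) {t : A} (ht : ‖t‖ < 1) :
    HasSum (fun k : ℕ => (k : A) ^ n * t ^ k)
      (Ring.inverse ((1 - t) ^ (n + 1)) * (t * aeval t (eulerianPoly n))) := by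
  obtain ⟨s, hs⟩ := summable_pow_mul_geometric_of_norm_lt_one n ht
  have hmk : HasSum (fun k => (PowerSeries.mk fun k : ℕ => (k : ℝ) ^ n).coeff k • t ^ k) s := by
    simpa [Algebra.smul_def] using hs
  have hprod := hasSum_coeff_coe_mul_smul_pow ((1 - X) ^ (n + 1)) hmk
  simp only [one_sub_X_pow_mul_mk_pow hn, coeff_coe] at hprod
  have hmul : (1 - t) ^ (n + 1) * s = t * aeval t (eulerianPoly n) := by
    simpa using hprod.unique (hasSum_coeff_smul_pow _ t)
  have hunit : IsUnit ((1 - t) ^ (n + 1)) := (isUnit_one_sub_of_norm_lt_one ht).pow _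
  rwa [(Ring.inverse_mul_eq_iff_eq_mul _ _ _ hunit).mpr hmul.symm]

/-- For every positive integer `n` and complex `t` with `|t| < 1`, the series
`∑_{k=1}^∞ k^n t^k` converges and equals `t·A_n(t)/(1−t)^(n+1)`. -/
theorem statement0 (n : ℕ) (hn : 1 ≤ n) (t : ℂ) (ht : ‖t‖ < 1) :
    HasSum (fun k : ℕ => (k : ℂ) ^ n * t ^ k)
      (t * Polynomial.aeval t (eulerianPoly n) / (1 - t) ^ (n + 1)) := by
  simpa only [Ring.inverse_eq_inv, inv_mul_eq_div] using
    statement0_general (Nat.one_le_iff_ne_zero.mp hn) ht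
end
end

section
/- For every integer n ≥ 2, the Eulerian polynomial A_n(t) (of degree n−1) has only real roots, all of its roots are negative, and all of its roots are simple (i.e., it has n−1 distinct real negative roots). -/
open Polynomial

noncomputable section

/-!
Put `R_n(u) = u^(n-1) A_n(1 - 1/u)`. The triangular recurrence of the Eulerian numbers becomes
`R_{n+1} = (u (u - 1) R_n)'`, so Rolle's theorem gives `R_{n+1}` at least one more zero outside
`{0, 1}` than `R_n`. Since `R_1 = 1`, the polynomial `R_n` has at least `n - 1` distinct real zeros
outside `{0, 1}`, and `u ↦ 1 - 1/u` maps them to distinct zeros of `A_n`. As `A_n` has degree at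
most `n - 1`, these are all its zeros, and as its coefficients are nonnegative with constant term
`1`, they are negative.
-/

theorem eulerianNum_succ_zero (n : ℕ) : eulerianNum (n + 1) 0 = 0 := by
  simp [eulerianNum]

theorem eulerianNum_succ_one (n : ℕ) : eulerianNum (n + 1) 1 = 1 := by
  simp [eulerianNum, Finset.sum_range_succ]

theorem eulerianNum_succ_succ (n m : ℕ) :
    eulerianNum (n + 1) (m + 1) =
      (m + 1) * eulerianNum n (m + 1) + (n + 1 - m) * eulerianNum n m := by
  unfold eulerianNum
  rw [Finset.sum_range_succ' _ (m + 1), Finset.sum_range_succ' _ (m + 1), mul_add,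
    Finset.mul_sum, Finset.mul_sum, add_right_comm (Finset.sum _ _), ← Finset.sum_add_distrib]
  congr 1
  · refine Finset.sum_congr rfl fun l hl => ?_
    have hlm : l ≤ m := Finset.mem_range_succ_iff.mp hl
    have pascal : ((n + 2).choose (l + 1) : ℝ) = (n + 1).choose l + (n + 1).choose (l + 1) :=
      mod_cast Nat.choose_succ_succ (n + 1) l
    have absorption : ((n : ℝ) + 2) * (n + 1).choose l = (n + 2).choose (l + 1) * (l + 1) :=
      mod_cast Nat.add_one_mul_choose_eq (n + 1) l
    rw [pascal] at absorption ⊢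
    rw [Nat.add_sub_add_right, Nat.cast_sub hlm]
    linear_combination -(-1 : ℝ) ^ l * ((m : ℝ) - l) ^ n * absorption
  · simp only [pow_zero, Nat.choose_zero_right, Nat.cast_one, mul_one, tsub_zero, Nat.cast_add,
      one_mul]
    ring

/-- The defining sum is the `(n + 1)`-st finite difference of `x ^ n`. -/
theorem eulerianNum_self_succ (n : ℕ) : eulerianNum n (n + 1) = 0 := by
  have h := congrFun (fwdDiff_iter_pow_eq_zero_of_lt (R := ℝ) n.lt_succ_self) 0
  rw [fwdDiff_iter_eq_sum_shift, ← Finset.sum_flip] at h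
  refine Eq.trans (Finset.sum_congr rfl fun l hl => ?_) h
  have hl : l ≤ n + 1 := Finset.mem_range_succ_iff.mp hl
  simp [Nat.sub_sub_self hl, Nat.choose_symm hl]

theorem eulerianNum_nonneg {n m : ℕ} (hm : m ≤ n) : 0 ≤ eulerianNum n m := by
  induction n generalizing m with
  | zero => simp [Nat.le_zero.mp hm, eulerianNum]
  | succ n ih =>
    rcases m with _ | m
    · exact (eulerianNum_succ_zero n).ge
    have hmn : m ≤ n := Nat.le_of_succ_le_succ hm
    have hnext : 0 ≤ eulerianNum n (m + 1) := by
      rcases hmn.eq_or_lt with rfl | hlt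
      · exact (eulerianNum_self_succ m).ge
      · exact ih hlt
    have hcoeff : (0 : ℝ) ≤ n + 1 - m := by
      have : (m : ℝ) ≤ n := mod_cast hmn
      linarith
    rw [eulerianNum_succ_succ]
    exact add_nonneg (mul_nonneg (by positivity) hnext) (mul_nonneg hcoeff (ih hmn))

theorem natDegree_eulerianPoly_le (n : ℕ) : (eulerianPoly n).natDegree ≤ n - 1 :=
  natDegree_sum_le_of_forall_le _ _ fun _ hj =>
    (natDegree_C_mul_X_pow_le _ _).trans (Nat.le_sub_one_of_lt (Finset.mem_range.mp hj))

theorem eval_eulerianPoly (n : ℕ) (t : ℝ) :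
    (eulerianPoly n).eval t = ∑ j ∈ Finset.range n, eulerianNum n (j + 1) * t ^ j := by
  simp [eulerianPoly, eval_finsetSum]

theorem eval_eulerianPoly_succ_pos (n : ℕ) {t : ℝ} (ht : 0 ≤ t) :
    0 < (eulerianPoly (n + 1)).eval t := by
  rw [eval_eulerianPoly, Finset.sum_range_succ', zero_add, eulerianNum_succ_one, pow_zero, mul_one]
  refine add_pos_of_nonneg_of_pos (Finset.sum_nonneg fun j hj => ?_) one_pos
  have hj : j < n := Finset.mem_range.mp hj
  exact mul_nonneg (eulerianNum_nonneg (by lia)) (pow_nonneg ht _)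

theorem eulerianPoly_succ_ne_zero (n : ℕ) : eulerianPoly (n + 1) ≠ 0 := by
  intro h
  have hpos := eval_eulerianPoly_succ_pos n le_rfl
  rw [h, eval_zero] at hpos
  exact hpos.false

/-- The transform `R_{n+1}(u) = u ^ n * A_{n+1}(1 - 1 / u)` of the Eulerian polynomial `A_{n+1}`,
written without denominators. The index is shifted so that no truncated subtraction `n - 1`
occurs in the degree. -/
def eulerianTransform (n : ℕ) : ℝ[X] :=
  ∑ j ∈ Finset.range (n + 1), C (eulerianNum (n + 1) (j + 1)) * ((X - 1) ^ j * X ^ (n - j))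

theorem eval_eulerianTransform (n : ℕ) {u : ℝ} (hu : u ≠ 0) :
    (eulerianTransform n).eval u = u ^ n * (eulerianPoly (n + 1)).eval (1 - u⁻¹) := by
  simp only [eulerianTransform, eval_finsetSum, eval_eulerianPoly, Finset.mul_sum]
  refine Finset.sum_congr rfl fun j hj => ?_
  have hj : j ≤ n := Finset.mem_range_succ_iff.mp hj
  have hsub : u - 1 = u * (1 - u⁻¹) := by field_simp
  simp only [eval_mul, eval_C, eval_pow, eval_sub, eval_X, eval_one]
  rw [hsub, mul_pow, ← Nat.add_sub_of_le hj, Nat.add_sub_cancel_left, pow_add]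
  ring

theorem eulerianTransform_ne_zero (n : ℕ) : eulerianTransform n ≠ 0 := by
  intro h
  have heval := eval_eulerianTransform n one_ne_zero
  rw [h, eval_zero, one_pow, one_mul, inv_one, sub_self] at heval
  exact (eval_eulerianPoly_succ_pos n le_rfl).ne heval

theorem derivative_X_mul_X_sub_one_mul {R : Type*} [CommRing R] (i k : ℕ) :
    derivative (X * (X - 1 : R[X]) * ((X - 1) ^ i * X ^ k)) =
      C ((i : R) + 1) * ((X - 1) ^ i * X ^ (k + 1)) +
        C ((k : R) + 1) * ((X - 1) ^ (i + 1) * X ^ k) := by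
  have hmul : X * (X - 1 : R[X]) * ((X - 1) ^ i * X ^ k) = (X - 1) ^ (i + 1) * X ^ (k + 1) := by
    ring
  simp only [hmul, derivative_mul, derivative_pow_succ, derivative_sub, derivative_X,
    derivative_one, sub_zero, mul_one]
  ring

theorem eulerianTransform_succ (n : ℕ) :
    eulerianTransform (n + 1) = derivative (X * (X - 1) * eulerianTransform n) := by
  let f (j : ℕ) : ℝ[X] :=
    C (((j : ℝ) + 1) * eulerianNum (n + 1) (j + 1)) * ((X - 1) ^ j * X ^ (n + 1 - j))
  let g (j : ℕ) : ℝ[X] :=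
    C (((n : ℝ) + 2 - j) * eulerianNum (n + 1) j) * ((X - 1) ^ j * X ^ (n + 1 - j))
  have hlast : f (n + 1) = 0 := by simp [f, eulerianNum_self_succ]
  have hfirst : g 0 = 0 := by simp [g, eulerianNum_succ_zero]
  calc eulerianTransform (n + 1)
      = ∑ j ∈ Finset.range (n + 2), (f j + g j) := by
        refine Finset.sum_congr rfl fun j _ => ?_
        rw [eulerianNum_succ_succ, ← add_mul, ← C_add]
        congr 3
        push_cast
        ring
    _ = ∑ j ∈ Finset.range (n + 1), (f j + g (j + 1)) := by
        rw [Finset.sum_add_distrib, Finset.sum_range_succ f, Finset.sum_range_succ' g, hlast,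
          hfirst, add_zero, add_zero, Finset.sum_add_distrib]
    _ = derivative (X * (X - 1) * eulerianTransform n) := by
        rw [eulerianTransform, Finset.mul_sum, derivative_sum]
        refine Finset.sum_congr rfl fun j hj => ?_
        obtain ⟨k, rfl⟩ := Nat.exists_eq_add_of_le (Finset.mem_range_succ_iff.mp hj)
        have hk : j + k + 1 - j = k + 1 := by lia
        have hweight : ((j + k : ℕ) : ℝ) + 2 - (j + 1 : ℕ) = k + 1 := by
          push_cast
          ring
        rw [Nat.add_sub_cancel_left, mul_left_comm, derivative_C_mul,
          derivative_X_mul_X_sub_one_mul]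
        simp only [f, g, hk, hweight, Nat.add_sub_add_right, Nat.add_sub_cancel_left, C_mul]
        ring

/-- Rolle's theorem applied to the zeros of `q` outside `Z` together with the points of `Z`. -/
theorem card_roots_sdiff_add_card_le_derivative {q : ℝ[X]} (hq : q ≠ 0) (Z : Finset ℝ) :
    (q.roots.toFinset \ Z).card + Z.card ≤
      ((derivative ((∏ z ∈ Z, (X - C z)) * q)).roots.toFinset \ Z).card + 1 := by
  set p := (∏ z ∈ Z, (X - C z)) * q
  have hp : p ≠ 0 := mul_ne_zero (Finset.prod_ne_zero_iff.mpr fun z _ => X_sub_C_ne_zero z) hq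
  have hroots : p.roots.toFinset = q.roots.toFinset ∪ Z := by
    rw [roots_mul hp, roots_prod_X_sub_C, Multiset.toFinset_add, Finset.val_toFinset,
      Finset.union_comm]
  calc (q.roots.toFinset \ Z).card + Z.card
      = p.roots.toFinset.card := by rw [Finset.card_sdiff_add_card, hroots]
    _ ≤ ((derivative p).roots.toFinset \ p.roots.toFinset).card + 1 :=
        card_roots_toFinset_le_card_roots_derivative_sdiff_roots_succ p
    _ ≤ ((derivative p).roots.toFinset \ Z).card + 1 := by
        rw [hroots]
        gcongr
        exact Finset.subset_union_right

theorem le_card_roots_eulerianTransform_sdiff (n : ℕ) :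
    n ≤ ((eulerianTransform n).roots.toFinset \ {0, 1}).card := by
  induction n with
  | zero => exact Nat.zero_le _
  | succ n ih =>
    have hrolle := card_roots_sdiff_add_card_le_derivative (eulerianTransform_ne_zero n) {0, 1}
    rw [Finset.prod_pair zero_ne_one, Finset.card_pair zero_ne_one, C_0, C_1, sub_zero,
      ← eulerianTransform_succ] at hrolle
    lia

theorem le_card_roots_eulerianPoly_succ (n : ℕ) :
    n ≤ (eulerianPoly (n + 1)).roots.toFinset.card := by
  refine (le_card_roots_eulerianTransform_sdiff n).trans
    (Finset.card_le_card_of_injOn (fun u => 1 - u⁻¹) (fun u hu => ?_)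
      (sub_right_injective.comp inv_injective).injOn)
  simp only [Finset.coe_sdiff, Set.mem_sdiff, Finset.mem_coe, Multiset.mem_toFinset,
    mem_roots (eulerianTransform_ne_zero n), Finset.mem_insert, Finset.mem_singleton,
    not_or] at hu
  obtain ⟨hroot, hu0, -⟩ := hu
  rw [IsRoot, eval_eulerianTransform n hu0] at hroot
  simpa [eulerianPoly_succ_ne_zero, hu0] using hroot

theorem exists_strictMono_eq_prod_of_le_card_roots {R : Type*} [CommRing R] [IsDomain R]
    [LinearOrder R] {p : R[X]} {k : ℕ} (hdeg : p.natDegree ≤ k)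
    (hcard : k ≤ p.roots.toFinset.card) :
    p.natDegree = k ∧ ∃ a : Fin k → R, StrictMono a ∧ (∀ i, p.IsRoot (a i)) ∧
      p = C p.leadingCoeff * ∏ i, (X - C (a i)) := by
  have hdistinct : p.roots.toFinset.card ≤ p.roots.card := Multiset.toFinset_card_le _
  have hroots : p.roots.card ≤ p.natDegree := p.card_roots'
  have hk : p.roots.toFinset.card = k := by lia
  have hnodup : p.roots.Nodup := Multiset.toFinset_card_eq_card_iff_nodup.mp (by lia)
  refine ⟨by lia, p.roots.toFinset.orderEmbOfFin hk, OrderEmbedding.strictMono _, fun i => ?_, ?_⟩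
  · exact isRoot_of_mem_roots (Multiset.mem_toFinset.mp (Finset.orderEmbOfFin_mem _ hk i))
  · calc p = C p.leadingCoeff * (p.roots.map (X - C ·)).prod :=
          (C_leadingCoeff_mul_prod_multiset_X_sub_C (by lia)).symm
      _ = C p.leadingCoeff * ∏ x ∈ p.roots.toFinset, (X - C x) := by
          rw [Finset.prod, Multiset.toFinset_val, hnodup.dedup]
      _ = C p.leadingCoeff * ∏ i, (X - C (p.roots.toFinset.orderEmbOfFin hk i)) := by
          conv_lhs => rw [← Finset.map_orderEmbOfFin_univ p.roots.toFinset hk, Finset.prod_map]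
          rfl

/-- For every integer `n ≥ 2`, the Eulerian polynomial `A_n` has degree `n − 1` and
has exactly `n − 1` distinct negative real roots, i.e. it has only real roots, all of
them negative and simple. -/
theorem statement1 (n : ℕ) (hn : 2 ≤ n) :
    (eulerianPoly n).natDegree = n - 1 ∧
    ∃ a : Fin (n - 1) → ℝ, StrictMono a ∧ (∀ i, a i < 0) ∧
      eulerianPoly n = C (eulerianPoly n).leadingCoeff * ∏ i, (X - C (a i)) := by
  obtain ⟨n, rfl⟩ : ∃ k, n = k + 1 := Nat.exists_eq_add_of_le' (one_le_two.trans hn)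
  obtain ⟨hdeg, a, ha, hroot, hprod⟩ := exists_strictMono_eq_prod_of_le_card_roots
    (natDegree_eulerianPoly_le (n + 1)) (le_card_roots_eulerianPoly_succ n)
  refine ⟨hdeg, a, ha, fun i => ?_, hprod⟩
  by_contra! hnonneg
  exact (eval_eulerianPoly_succ_pos n hnonneg).ne' (hroot i)
end
end

section
/- Let F, f, g be real polynomials with F(x) = a(x)f(x) + b(x)g(x) for real polynomials a, b, such that deg F = deg f or deg F = deg f + 1, f and g have only real roots, g ≼ f, and F and g have leading coefficients of the same sign. If b(r) ≤ 0 whenever f(r) = 0, then F has only real roots and f ≼ F. Moreover, if g ≺ f and b(r) < 0 whenever f(r) = 0, then f ≺ F. -/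
open Polynomial

noncomputable section

/-- A real polynomial is *standard* if it is identically zero or its leading
coefficient is positive. -/
def IsStandard (p : Polynomial ℝ) : Prop := p = 0 ∨ 0 < p.leadingCoeff

/-- `p` belongs to `RZ`: it has only real zeros, i.e. its real roots (with
multiplicity) account for its full degree. -/
def OnlyRealZeros (p : Polynomial ℝ) : Prop := p.roots.card = p.natDegree

/-- `g` alternates `f`: both have degree `n`, both factor over ℝ, and their roots
(in increasing order) satisfy `b 0 ≤ a 0 ≤ b 1 ≤ a 1 ≤ ⋯ ≤ b (n-1) ≤ a (n-1)`. -/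
def Alternates (g f : Polynomial ℝ) : Prop :=
  f ≠ 0 ∧ g ≠ 0 ∧ ∃ (n : ℕ) (a b : Fin n → ℝ),
    f.natDegree = n ∧ g.natDegree = n ∧
    f = C f.leadingCoeff * ∏ i, (X - C (a i)) ∧
    g = C g.leadingCoeff * ∏ i, (X - C (b i)) ∧
    (∀ i, b i ≤ a i) ∧
    (∀ (i : Fin n) (h : (i : ℕ) + 1 < n), a i ≤ b ⟨(i : ℕ) + 1, h⟩)

/-- `g` strictly alternates `f`. -/
def StrictAlternates (g f : Polynomial ℝ) : Prop :=
  f ≠ 0 ∧ g ≠ 0 ∧ ∃ (n : ℕ) (a b : Fin n → ℝ),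
    f.natDegree = n ∧ g.natDegree = n ∧
    f = C f.leadingCoeff * ∏ i, (X - C (a i)) ∧
    g = C g.leadingCoeff * ∏ i, (X - C (b i)) ∧
    (∀ i, b i < a i) ∧
    (∀ (i : Fin n) (h : (i : ℕ) + 1 < n), a i < b ⟨(i : ℕ) + 1, h⟩)

/-- `g` interlaces `f`: `deg f = deg g + 1`, both factor over ℝ, and their roots
(in increasing order) satisfy `a 0 ≤ b 0 ≤ a 1 ≤ ⋯ ≤ b (n-1) ≤ a n`. -/
def Interlaces (g f : Polynomial ℝ) : Prop :=
  f ≠ 0 ∧ g ≠ 0 ∧ ∃ (n : ℕ) (a : Fin (n + 1) → ℝ) (b : Fin n → ℝ),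
    f.natDegree = n + 1 ∧ g.natDegree = n ∧
    f = C f.leadingCoeff * ∏ i, (X - C (a i)) ∧
    g = C g.leadingCoeff * ∏ i, (X - C (b i)) ∧
    ∀ i : Fin n, a i.castSucc ≤ b i ∧ b i ≤ a i.succ

/-- `g` strictly interlaces `f`. -/
def StrictInterlaces (g f : Polynomial ℝ) : Prop :=
  f ≠ 0 ∧ g ≠ 0 ∧ ∃ (n : ℕ) (a : Fin (n + 1) → ℝ) (b : Fin n → ℝ),
    f.natDegree = n + 1 ∧ g.natDegree = n ∧
    f = C f.leadingCoeff * ∏ i, (X - C (a i)) ∧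
    g = C g.leadingCoeff * ∏ i, (X - C (b i)) ∧
    ∀ i : Fin n, a i.castSucc < b i ∧ b i < a i.succ

/-- `g ≼ f`: `g` alternates or interlaces `f`. -/
def PrecEq (g f : Polynomial ℝ) : Prop := Alternates g f ∨ Interlaces g f

/-- `g ≺ f`: `g` strictly alternates or strictly interlaces `f`. -/
def Prec (g f : Polynomial ℝ) : Prop := StrictAlternates g f ∨ StrictInterlaces g f

/-!
The roots of `g` and `f` merge into one decreasing list in which they take turns, starting with a
root of `f`. At a root of `f` we have `F * g = b * g ^ 2`. In the strict case this is negative, so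
`F` and `g` have opposite signs at the roots of `f`, where the signs of `g` alternate; working down
from the top, the intermediate value theorem places a root of `F` above each root of `f`, and the
bound on `deg F` leaves room for at most one more root, which lies below all the others.

In the weak case, if `f` shares a root `r` with `g` or with `F`, we divide by `X - r` and induct.
When `r` is a root of `F` but not of `g`, it is a root of `b`; we delete `r` and the root `s` of `g`
following it (if any), so that `b * g` turns into the product of `b * (X - s) / (X - r)` and
`g / (X - s)`. The factor `(X - s) / (X - r)` is positive at the other roots of `f`. Multiplying
back by `X - r` inserts `r` twice into the merged list of `f` and `F`, which leaves the roots taking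
turns. Without such a common root, `F * g` is negative at the roots of `f` as in the strict case.
-/

section Ring

variable {K : Type*} [CommRing K]

/-- The monic polynomial whose roots are the entries in positions `0, 2, 4, …` of a list. If the
list merges the roots of two polynomials that take turns, then `alternatingProd L` and
`alternatingProd L.tail` are these two polynomials. -/
def alternatingProd : List K → K[X]
  | [] => 1
  | c :: t => (X - C c) * alternatingProd t.tail
termination_by L => L.length

@[simp]
theorem alternatingProd_nil : alternatingProd ([] : List K) = 1 := by
  rw [alternatingProd]

@[simp]
theorem alternatingProd_cons (c : K) (t : List K) :
    alternatingProd (c :: t) = (X - C c) * alternatingProd t.tail := by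
  rw [alternatingProd]

theorem alternatingProd_monic : ∀ L : List K, (alternatingProd L).Monic
  | [] => by simp
  | [c] => by simpa using monic_X_sub_C c
  | c :: _ :: t => by simpa using (monic_X_sub_C c).mul (alternatingProd_monic t)

theorem mem_of_isRoot_alternatingProd [IsDomain K] {r : K} :
    ∀ {L : List K}, (alternatingProd L).IsRoot r → r ∈ L
  | [], h => by simp at h
  | [c], h => by simpa [sub_eq_zero] using h
  | c :: d :: t, h => by
    simp only [alternatingProd_cons, List.tail_cons, root_mul, root_X_sub_C] at h
    rcases h with rfl | h
    · simp
    · simp [mem_of_isRoot_alternatingProd h]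

/-- `Interleaved R g f` is the monic form of `g ≼ f` (for `R` the relation `≥`) and of `g ≺ f`
(for `R` the relation `>`): the roots of `f` and `g` merge into one list, ordered by `R` and thus
decreasing, in which they take turns, the first entry being a root of `f`. -/
def Interleaved (R : K → K → Prop) (g f : K[X]) : Prop :=
  ∃ L : List K, L.IsChain R ∧ f = alternatingProd L ∧ g = alternatingProd L.tail

theorem Interleaved.monic {R : K → K → Prop} {g f : K[X]} (h : Interleaved R g f) : f.Monic := by
  obtain ⟨L, -, rfl, -⟩ := h
  exact alternatingProd_monic L

theorem natDegree_X_sub_C_mul [Nontrivial K] (r : K) {p : K[X]} (hp : p.Monic) :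
    ((X - C r) * p).natDegree = p.natDegree + 1 := by
  rw [(monic_X_sub_C r).natDegree_mul hp, natDegree_X_sub_C, add_comm]

end Ring

section OrderedRing

variable {K : Type*} [CommRing K] [LinearOrder K]

theorem alternatingProd_orderedInsert_twice (r : K) : ∀ L : List K,
    alternatingProd ((L.orderedInsert (· ≥ ·) r).orderedInsert (· ≥ ·) r) =
        (X - C r) * alternatingProd L ∧
      alternatingProd ((L.orderedInsert (· ≥ ·) r).orderedInsert (· ≥ ·) r).tail =
        (X - C r) * alternatingProd L.tail
  | [] => by simp
  | c :: t => by
    obtain ⟨ih, ih_tail⟩ := alternatingProd_orderedInsert_twice r t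
    by_cases hcr : c ≤ r
    · simp [hcr]
    · simp [hcr, ih, ih_tail, mul_left_comm]

theorem Interleaved.X_sub_C_mul {g f : K[X]} (h : Interleaved (· ≥ ·) g f) (r : K) :
    Interleaved (· ≥ ·) ((X - C r) * g) ((X - C r) * f) := by
  obtain ⟨L, hL, rfl, rfl⟩ := h
  obtain ⟨hodd, heven⟩ := alternatingProd_orderedInsert_twice r L
  refine ⟨_, ?_, hodd.symm, heven.symm⟩
  exact List.isChain_iff_pairwise.2
    (((List.isChain_iff_pairwise.1 hL).orderedInsert r L).orderedInsert r _)

theorem isChain_gt_or_exists_deletion : ∀ {L : List K}, L.IsChain (· ≥ ·) →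
    L.IsChain (· > ·) ∨ ∃ (r : K) (L' : List K), L'.Sublist L ∧
      alternatingProd L = (X - C r) * alternatingProd L' ∧
      alternatingProd L.tail = (X - C r) * alternatingProd L'.tail
  | [], _ => by simp
  | [c], _ => by simp
  | c :: d :: t, h => by
    obtain ⟨hdc, ht⟩ := List.isChain_cons_cons.1 h
    rcases isChain_gt_or_exists_deletion ht with hgt | ⟨r, L', hsub, hprod, hprod_tail⟩
    · rcases hdc.lt_or_eq with hlt | rfl
      · exact .inl (List.isChain_cons_cons.2 ⟨hlt, hgt⟩)
      · exact .inr ⟨d, t, by simp, by simp, by simp⟩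
    · refine .inr ⟨r, c :: L', hsub.cons_cons c, ?_, by simpa using hprod⟩
      rw [alternatingProd_cons, hprod_tail, alternatingProd_cons, mul_left_comm]

theorem Interleaved.gt_or_exists_common_factor {g f : K[X]} (h : Interleaved (· ≥ ·) g f) :
    Interleaved (· > ·) g f ∨ ∃ (r : K) (g' f' : K[X]), Interleaved (· ≥ ·) g' f' ∧
      f = (X - C r) * f' ∧ g = (X - C r) * g' := by
  obtain ⟨L, hL, rfl, rfl⟩ := h
  rcases isChain_gt_or_exists_deletion hL with hgt | ⟨r, L', hsub, hprod, hprod_tail⟩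
  · exact .inl ⟨L, hgt, rfl, rfl⟩
  · exact .inr ⟨r, _, _, ⟨L', hL.sublist hsub, rfl, rfl⟩, hprod, hprod_tail⟩

theorem Interleaved.ge {g f : K[X]} (h : Interleaved (· > ·) g f) :
    Interleaved (· ≥ ·) g f := by
  obtain ⟨L, hL, hf, hg⟩ := h
  exact ⟨L, hL.imp fun _ _ => le_of_lt, hf, hg⟩

variable [IsStrictOrderedRing K]

theorem alternatingProd_eval_pos {r : K} :
    ∀ {L : List K}, (∀ c ∈ L, c < r) → 0 < (alternatingProd L).eval r
  | [], _ => by simp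
  | [c], h => by simpa using h
  | c :: d :: t, h => by
    simp only [List.forall_mem_cons] at h
    simpa using mul_pos (sub_pos.2 h.1) (alternatingProd_eval_pos h.2.2)

theorem Interleaved.not_isRoot_left {g f : K[X]} (h : Interleaved (· > ·) g f) {r : K}
    (hf : f.IsRoot r) : ¬ g.IsRoot r := by
  obtain ⟨L, hL, rfl, rfl⟩ := h
  intro hg
  induction L with
  | nil => simp at hf
  | cons c t ih =>
    simp only [alternatingProd_cons, root_mul, root_X_sub_C] at hf
    rcases hf with rfl | hf
    · exact lt_irrefl c (hL.rel_cons (mem_of_isRoot_alternatingProd hg))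
    · exact ih hL.of_cons hg hf

/-- The factor `q` is `X - s` for the entry `s` following `r`, and `1` if `r` is the last entry. -/
theorem exists_deletion_of_isRoot {r : K} : ∀ {L : List K}, L.IsChain (· > ·) →
    (alternatingProd L).IsRoot r → ∃ (L' : List K) (q : K[X]), L'.Sublist L ∧
      alternatingProd L = (X - C r) * alternatingProd L' ∧
      alternatingProd L.tail = q * alternatingProd L'.tail ∧
      ∀ x, (x ∈ L' ∨ ∀ c ∈ L, c < x) → 0 < (x - r) * q.eval x
  | [], _, hr => by simp at hr
  | [c], _, hr => by
    obtain rfl : r = c := by simpa [sub_eq_zero] using hr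
    exact ⟨[], 1, by simp⟩
  | c :: d :: t, hL, hr => by
    obtain ⟨hdc, hdt⟩ := List.isChain_cons_cons.1 hL
    have hlt_d : ∀ x ∈ t, x < d := fun x hx => hdt.rel_cons hx
    have hlt_c : ∀ x ∈ t, x < c := fun x hx => (hlt_d x hx).trans hdc
    simp only [alternatingProd_cons, List.tail_cons, root_mul, root_X_sub_C] at hr
    rcases hr with rfl | hr
    · refine ⟨t, X - C d, by simp, by simp, by simp, ?_⟩
      rintro x (hx | hx)
      · simpa using mul_pos_of_neg_of_neg (sub_neg.2 (hlt_c x hx)) (sub_neg.2 (hlt_d x hx))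
      · simp only [List.forall_mem_cons] at hx
        simpa using mul_pos (sub_pos.2 hx.1) (sub_pos.2 hx.2.1)
    · obtain ⟨L', q, hsub, hprod, hprod_tail, hpos⟩ := exists_deletion_of_isRoot hdt.of_cons hr
      refine ⟨c :: d :: L', q, (hsub.cons_cons d).cons_cons c, ?_, ?_, ?_⟩
      · simp [hprod, mul_left_comm]
      · simp [hprod_tail, mul_left_comm]
      · intro x hx
        apply hpos
        simp only [List.mem_cons] at hx
        rcases hx with (rfl | rfl | hx) | hx
        · exact .inr hlt_c
        · exact .inr hlt_d
        · exact .inl hx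
        · exact .inr fun y hy => hx y (by simp [hy])

theorem Interleaved.exists_combination_div_X_sub_C {g f b : K[X]} {r : K}
    (h : Interleaved (· > ·) g f) (hf : f.IsRoot r) (hbr : b.IsRoot r)
    (hb : ∀ x, f.IsRoot x → b.eval x ≤ 0) :
    ∃ g' f' b' : K[X], Interleaved (· ≥ ·) g' f' ∧ f = (X - C r) * f' ∧
      b * g = (X - C r) * (b' * g') ∧ ∀ x, f'.IsRoot x → b'.eval x ≤ 0 := by
  obtain ⟨L, hL, rfl, rfl⟩ := h
  obtain ⟨c, rfl⟩ := dvd_iff_isRoot.2 hbr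
  obtain ⟨L', q, hsub, hprod, hprod_tail, hpos⟩ := exists_deletion_of_isRoot hL hf
  refine ⟨_, _, c * q, ⟨L', (hL.sublist hsub).imp fun _ _ => le_of_lt, rfl, rfl⟩, hprod, ?_, ?_⟩
  · rw [hprod_tail]
    ring
  · intro x hx
    have hq : 0 < (x - r) * q.eval x := hpos x (.inl (mem_of_isRoot_alternatingProd hx))
    have hc : (x - r) * c.eval x ≤ 0 := by
      simpa using hb x (by rw [hprod]; exact root_mul_left_of_isRoot _ hx)
    have hne : x - r ≠ 0 := left_ne_zero_of_mul hq.ne'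
    rw [eval_mul]
    refine nonpos_of_mul_nonpos_right (a := (x - r) ^ 2) ?_ (by positivity)
    linarith [mul_nonpos_of_nonpos_of_nonneg hc hq.le]

end OrderedRing

section Real

theorem exists_factor_of_eval_neg_of_eval_pos {F : ℝ[X]} (hF : F.Monic) {r u : ℝ} (hru : r < u)
    (hr : F.eval r < 0) (hu : 0 < F.eval u) :
    ∃ (d : ℝ) (G : ℝ[X]), d ∈ Set.Ioo r u ∧ F = (X - C d) * G ∧ G.Monic ∧ 0 < G.eval r := by
  obtain ⟨d, hd, hroot⟩ := intermediate_value_Ioo hru.le F.continuousOn ⟨hr, hu⟩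
  obtain ⟨G, rfl⟩ := dvd_iff_isRoot.2 hroot
  refine ⟨d, G, hd, rfl, (monic_X_sub_C d).of_mul_monic_left hF, ?_⟩
  rw [eval_mul, eval_sub, eval_X, eval_C] at hr
  exact pos_of_mul_neg_right hr (sub_neg.2 hd.1).le

theorem exists_isChain_of_natDegree_le_one {u : ℝ} {F : ℝ[X]} (hF : F.Monic) (hu : 0 < F.eval u)
    (hdeg : F.natDegree ≤ 1) :
    ∃ M : List ℝ, (u :: M).IsChain (· > ·) ∧ F = alternatingProd M ∧
      alternatingProd M.tail = 1 := by
  obtain hdeg | hdeg := Nat.le_one_iff_eq_zero_or_eq_one.1 hdeg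
  · exact ⟨[], by simp [hF.natDegree_eq_zero.1 hdeg]⟩
  · have hX := hF.eq_X_add_C hdeg
    have hroot : -F.coeff 0 < u := by
      rw [hX, eval_add, eval_X, eval_C] at hu
      linarith
    exact ⟨[-F.coeff 0], by simpa using hroot, by simpa using hX, by simp⟩

theorem eval_mul_neg_of_eval_X_sub_C_mul_mul_neg {r d x : ℝ} {t : List ℝ} {G : ℝ[X]}
    (hrt : (r :: t).IsChain (· > ·)) (hrd : r < d) (hx : (alternatingProd t.tail).IsRoot x)
    (hneg : ((X - C d) * G).eval x * (alternatingProd t).eval x < 0) :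
    G.eval x * (alternatingProd t.tail.tail).eval x < 0 := by
  cases t with
  | nil => simp at hx
  | cons s t =>
    have hsr : s < r := (List.isChain_cons_cons.1 hrt).1
    have hxs : x < s := hrt.of_cons.rel_cons (mem_of_isRoot_alternatingProd hx)
    have hsign : 0 < (x - d) * (x - s) := mul_pos_of_neg_of_neg (by linarith) (by linarith)
    refine neg_of_mul_neg_right (a := (x - d) * (x - s)) ?_ hsign.le
    simp only [List.tail_cons, alternatingProd_cons, eval_mul, eval_sub, eval_X, eval_C] at hneg ⊢
    linarith

theorem exists_isChain_of_eval_mul_neg : ∀ {L : List ℝ} {u : ℝ} {F : ℝ[X]}, F.Monic →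
    0 < F.eval u → (u :: L).IsChain (· > ·) →
    F.natDegree ≤ (alternatingProd L).natDegree + 1 →
    (∀ x, (alternatingProd L).IsRoot x → F.eval x * (alternatingProd L.tail).eval x < 0) →
    ∃ M : List ℝ, (u :: M).IsChain (· > ·) ∧ F = alternatingProd M ∧
      alternatingProd M.tail = alternatingProd L
  | [], u, F, hF, hu, _, hdeg, _ => by
    simpa using exists_isChain_of_natDegree_le_one hF hu (by simpa using hdeg)
  | r :: t, u, F, hF, hu, hL, hdeg, hneg => by
    obtain ⟨hru, hrt⟩ := List.isChain_cons_cons.1 hL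
    have hFr : F.eval r < 0 :=
      neg_of_mul_neg_left (hneg r (by simp))
        (alternatingProd_eval_pos fun c hc => hrt.rel_cons hc).le
    obtain ⟨d, G, ⟨hrd, hdu⟩, rfl, hG, hGr⟩ :=
      exists_factor_of_eval_neg_of_eval_pos hF hru hFr hu
    have hdegG : G.natDegree ≤ (alternatingProd t.tail).natDegree + 1 := by
      rwa [alternatingProd_cons, natDegree_X_sub_C_mul d hG,
        natDegree_X_sub_C_mul r (alternatingProd_monic _), Nat.add_le_add_iff_right] at hdeg
    obtain ⟨M, hM, hGM, hMt⟩ := exists_isChain_of_eval_mul_neg hG hGr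
      (hrt.sublist ((List.tail_sublist t).cons_cons r)) hdegG fun x hx =>
        eval_mul_neg_of_eval_X_sub_C_mul_mul_neg hrt hrd hx
          (hneg x (by rw [alternatingProd_cons]; exact root_mul_left_of_isRoot _ hx))
    exact ⟨d :: r :: M, by simp [hdu, hrd, hM], by simp [hGM], by simp [hMt]⟩
termination_by L => L.length

theorem eventually_eval_pos_of_monic {K : Type*} [NormedField K] [LinearOrder K]
    [IsStrictOrderedRing K] [OrderTopology K] {F : K[X]} (hF : F.Monic) :
    ∀ᶠ u in Filter.atTop, 0 < F.eval u := by
  obtain hdeg | hdeg := Nat.eq_zero_or_pos F.natDegree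
  · simp [hF.natDegree_eq_zero.1 hdeg]
  · exact (F.tendsto_atTop_of_leadingCoeff_nonneg (natDegree_pos_iff_degree_pos.1 hdeg)
      (by simp [hF.leadingCoeff])).eventually_gt_atTop 0

theorem Interleaved.gt_of_eval_mul_neg {F f g : ℝ[X]} (h : Interleaved (· > ·) g f)
    (hF : F.Monic) (hdeg : F.natDegree ≤ f.natDegree + 1)
    (hneg : ∀ x, f.IsRoot x → F.eval x * g.eval x < 0) : Interleaved (· > ·) f F := by
  obtain ⟨L, hL, rfl, rfl⟩ := h
  have hlarge : ∀ᶠ u in Filter.atTop, ∀ c ∈ L.head?, c < u := by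
    cases L with
    | nil => simp
    | cons c t => simpa using Filter.eventually_gt_atTop c
  obtain ⟨u, hFu, hu⟩ := ((eventually_eval_pos_of_monic hF).and hlarge).exists
  obtain ⟨M, hM, hFM, hLM⟩ := exists_isChain_of_eval_mul_neg hF hFu (hL.cons hu) hdeg hneg
  exact ⟨M, hM.of_cons, hFM, hLM.symm⟩

theorem Interleaved.ge_of_eq_add {F f g a b : ℝ[X]} (h : Interleaved (· ≥ ·) g f)
    (hF : F.Monic) (hdeg : F.natDegree ≤ f.natDegree + 1) (hFab : F = a * f + b * g)
    (hb : ∀ x, f.IsRoot x → b.eval x ≤ 0) : Interleaved (· ≥ ·) f F := by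
  induction hn : f.natDegree using Nat.strong_induction_on generalizing F f g b with
  | _ n ih =>
  have descend {r : ℝ} {f' g' b' : ℝ[X]} (h' : Interleaved (· ≥ ·) g' f')
      (hf : f = (X - C r) * f') (hbg : b * g = (X - C r) * (b' * g'))
      (hb' : ∀ x, f'.IsRoot x → b'.eval x ≤ 0) : Interleaved (· ≥ ·) f F := by
    obtain rfl : F = (X - C r) * (a * f' + b' * g') := by
      rw [hFab, hbg, hf]
      ring
    have hF' : (a * f' + b' * g').Monic := (monic_X_sub_C r).of_mul_monic_left hF
    have hdeg_f : f.natDegree = f'.natDegree + 1 := by rw [hf, natDegree_X_sub_C_mul r h'.monic]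
    rw [natDegree_X_sub_C_mul r hF'] at hdeg
    rw [hf]
    exact (ih _ (by lia) h' hF' (by lia) rfl hb' rfl).X_sub_C_mul r
  rcases h.gt_or_exists_common_factor with hgt | ⟨r, g', f', h', rfl, rfl⟩
  · have hFx {x : ℝ} (hx : f.IsRoot x) : F.eval x = b.eval x * g.eval x := by
      simp [hFab, hx.eq_zero]
    by_cases hcommon : ∃ r, f.IsRoot r ∧ F.IsRoot r
    · obtain ⟨r, hfr, hFr⟩ := hcommon
      have hbr : b.IsRoot r :=
        (mul_eq_zero.1 ((hFx hfr).symm.trans hFr)).resolve_right (hgt.not_isRoot_left hfr)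
      obtain ⟨g', f', b', h', hf, hbg, hb'⟩ := hgt.exists_combination_div_X_sub_C hfr hbr hb
      exact descend h' hf hbg hb'
    · refine (hgt.gt_of_eval_mul_neg hF hdeg fun x hx => ?_).ge
      have hne : F.eval x * g.eval x ≠ 0 :=
        mul_ne_zero (fun hFr => hcommon ⟨x, hx, hFr⟩) (hgt.not_isRoot_left hx)
      refine lt_of_le_of_ne ?_ hne
      rw [hFx hx, mul_assoc]
      exact mul_nonpos_of_nonpos_of_nonneg (hb x hx) (mul_self_nonneg _)
  · exact descend h' rfl (mul_left_comm _ _ _) fun x hx => hb x (root_mul_left_of_isRoot _ hx)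

theorem Interleaved.gt_of_eq_add {F f g a b : ℝ[X]} (h : Interleaved (· > ·) g f)
    (hF : F.Monic) (hdeg : F.natDegree ≤ f.natDegree + 1) (hFab : F = a * f + b * g)
    (hb : ∀ x, f.IsRoot x → b.eval x < 0) : Interleaved (· > ·) f F := by
  refine h.gt_of_eval_mul_neg hF hdeg fun x hx => ?_
  rw [hFab, eval_add, eval_mul, hx.eq_zero, mul_zero, zero_add, eval_mul, mul_assoc]
  exact mul_neg_of_neg_of_pos (hb x hx) (mul_self_pos.2 (h.not_isRoot_left hx))

end Real
section Tuples

variable {K : Type*} {R : K → K → Prop}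

/-- The root condition of `Alternates` and `StrictAlternates`, with the order `R` between
consecutive roots (the larger one on the left) as a parameter. -/
def RootsAlternate (R : K → K → Prop) {n : ℕ} (b a : Fin n → K) : Prop :=
  (∀ i, R (a i) (b i)) ∧ ∀ (i : Fin n) (h : (i : ℕ) + 1 < n), R (b ⟨(i : ℕ) + 1, h⟩) (a i)

/-- The root condition of `Interlaces` and `StrictInterlaces`, with the order `R` between
consecutive roots (the larger one on the left) as a parameter. -/
def RootsInterlace (R : K → K → Prop) {n : ℕ} (b : Fin n → K) (a : Fin (n + 1) → K) : Prop :=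
  ∀ i : Fin n, R (b i) (a i.castSucc) ∧ R (a i.succ) (b i)

theorem rootsInterlace_snoc_snoc {n : ℕ} {b : Fin n → K} {a : Fin (n + 1) → K} {c d : K} :
    RootsInterlace R (Fin.snoc b d : Fin (n + 1) → K) (Fin.snoc a c : Fin (n + 2) → K) ↔
      RootsInterlace R b a ∧ R d (a (Fin.last n)) ∧ R c d := by
  simp [RootsInterlace, Fin.forall_fin_succ', Fin.succ_castSucc, -Fin.castSucc_succ]

theorem rootsAlternate_snoc {n : ℕ} {a : Fin n → K} {b : Fin (n + 1) → K} {c : K} :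
    RootsAlternate R b (Fin.snoc a c : Fin (n + 1) → K) ↔
      RootsInterlace R a b ∧ R c (b (Fin.last n)) := by
  constructor
  · rintro ⟨hle, hnext⟩
    refine ⟨fun i => ⟨by simpa using hle i.castSucc, ?_⟩, by simpa using hle (Fin.last n)⟩
    exact Fin.snoc_castSucc (α := fun _ => K) c a i ▸ hnext i.castSucc (by simp)
  · rintro ⟨h, hc⟩
    exact ⟨Fin.lastCases (by simpa using hc) fun i => by simpa using (h i).1,
      Fin.lastCases (by simp) fun i _ => by rw [Fin.snoc_castSucc]; exact (h i).2⟩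

variable [CommRing K]

theorem prod_X_sub_C_snoc {n : ℕ} (a : Fin n → K) (c : K) :
    ∏ i, (X - C ((Fin.snoc a c : Fin (n + 1) → K) i)) = (X - C c) * ∏ i, (X - C (a i)) := by
  simp [Fin.prod_univ_castSucc, mul_comm]

theorem RootsInterlace.exists_isChain {n : ℕ} {b : Fin n → K} {a : Fin (n + 1) → K}
    (h : RootsInterlace R b a) :
    ∃ L : List K, (a (Fin.last n) :: L).IsChain R ∧
      ∏ i, (X - C (a i)) = alternatingProd (a (Fin.last n) :: L) ∧
      ∏ i, (X - C (b i)) = alternatingProd L := by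
  induction n with
  | zero => exact ⟨[], by simp⟩
  | succ n ih =>
    cases a using Fin.snocCases with | snoc a c
    cases b using Fin.snocCases with | snoc b d
    obtain ⟨h, hda, hcd⟩ := rootsInterlace_snoc_snoc.1 h
    obtain ⟨L, hL, ha, hb⟩ := ih h
    refine ⟨d :: a (Fin.last n) :: L, ?_, ?_, ?_⟩
    · simp [hL, hda, hcd]
    · rw [prod_X_sub_C_snoc, ha]
      simp
    · rw [prod_X_sub_C_snoc, hb]
      simp

theorem exists_rootsInterlace {n : ℕ} {c : K} {L : List K} (hlen : L.length = 2 * n)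
    (h : (c :: L).IsChain R) :
    ∃ (b : Fin n → K) (a : Fin (n + 1) → K), RootsInterlace R b a ∧ a (Fin.last n) = c ∧
      alternatingProd (c :: L) = ∏ i, (X - C (a i)) ∧
      alternatingProd L = ∏ i, (X - C (b i)) := by
  induction n generalizing c L with
  | zero =>
    obtain rfl : L = [] := by simpa using hlen
    exact ⟨![], ![c], by simp [RootsInterlace], by simp⟩
  | succ n ih =>
    obtain ⟨d, e, T, rfl⟩ : ∃ d e T, L = d :: e :: T := by
      match L with
      | d :: e :: T => exact ⟨d, e, T, rfl⟩
    obtain ⟨hdc, hed, hT⟩ : R c d ∧ R d e ∧ (e :: T).IsChain R := by simpa using h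
    obtain ⟨b, a, hab, rfl, ha, hb⟩ := ih (by simpa [mul_add] using hlen) hT
    refine ⟨Fin.snoc b d, Fin.snoc a c, rootsInterlace_snoc_snoc.2 ⟨hab, hed, hdc⟩, by simp,
      ?_, ?_⟩
    · simp only [prod_X_sub_C_snoc, ← ha, alternatingProd_cons, List.tail_cons]
    · simp only [prod_X_sub_C_snoc, ← hb, alternatingProd_cons, List.tail_cons]

theorem interleaved_iff {g f : K[X]} :
    Interleaved R g f ↔
      (∃ (n : ℕ) (a b : Fin n → K), f = ∏ i, (X - C (a i)) ∧ g = ∏ i, (X - C (b i)) ∧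
        RootsAlternate R b a) ∨
      ∃ (n : ℕ) (a : Fin (n + 1) → K) (b : Fin n → K), f = ∏ i, (X - C (a i)) ∧
        g = ∏ i, (X - C (b i)) ∧ RootsInterlace R b a := by
  constructor
  · rintro ⟨L, hL, rfl, rfl⟩
    match L, hL with
    | [], _ => exact .inl ⟨0, ![], ![], by simp [RootsAlternate]⟩
    | c :: L, hL =>
      obtain ⟨n, hn | hn⟩ := Nat.even_or_odd' L.length
      · obtain ⟨b, a, h, -, ha, hb⟩ := exists_rootsInterlace hn hL
        exact .inr ⟨n, a, b, ha, hb, h⟩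
      · obtain ⟨d, T, rfl⟩ := List.exists_cons_of_length_eq_add_one hn
        obtain ⟨hcd, hT⟩ := List.isChain_cons_cons.1 hL
        obtain ⟨a, b, h, rfl, hb, ha⟩ := exists_rootsInterlace (by simpa using hn) hT
        refine .inl ⟨n + 1, Fin.snoc a c, b, ?_, hb, rootsAlternate_snoc.2 ⟨h, hcd⟩⟩
        rw [prod_X_sub_C_snoc, ← ha, alternatingProd_cons, List.tail_cons]
  · rintro (⟨_ | n, a, b, rfl, rfl, h⟩ | ⟨n, a, b, rfl, rfl, h⟩)
    · exact ⟨[], by simp⟩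
    · cases a using Fin.snocCases with | snoc a c
      obtain ⟨h, hc⟩ := rootsAlternate_snoc.1 h
      obtain ⟨L, hL, hb, ha⟩ := h.exists_isChain
      refine ⟨c :: b (Fin.last n) :: L, by simp [hL, hc], ?_, hb⟩
      rw [prod_X_sub_C_snoc, ha, alternatingProd_cons, List.tail_cons]
    · obtain ⟨L, hL, ha, hb⟩ := h.exists_isChain
      exact ⟨_, hL, ha, hb⟩

end Tuples

section Field

variable {K : Type*} [Field K] {R : K → K → Prop}

/-- `g ≼ f` and `g ≺ f` at once, with the order `R` between consecutive roots (the larger one on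
the left) as a parameter: `≥` gives `PrecEq` and `>` gives `Prec`. -/
def PrecRel (R : K → K → Prop) (g f : K[X]) : Prop :=
  (f ≠ 0 ∧ g ≠ 0 ∧ ∃ (n : ℕ) (a b : Fin n → K),
    f.natDegree = n ∧ g.natDegree = n ∧
    f = C f.leadingCoeff * ∏ i, (X - C (a i)) ∧
    g = C g.leadingCoeff * ∏ i, (X - C (b i)) ∧
    RootsAlternate R b a) ∨
  (f ≠ 0 ∧ g ≠ 0 ∧ ∃ (n : ℕ) (a : Fin (n + 1) → K) (b : Fin n → K),
    f.natDegree = n + 1 ∧ g.natDegree = n ∧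
    f = C f.leadingCoeff * ∏ i, (X - C (a i)) ∧
    g = C g.leadingCoeff * ∏ i, (X - C (b i)) ∧
    RootsInterlace R b a)

variable [DecidableEq K]

theorem normalize_eq_C_leadingCoeff_inv_mul (p : K[X]) :
    normalize p = C p.leadingCoeff⁻¹ * p := by
  rcases eq_or_ne p 0 with rfl | hp
  · simp
  · rw [normalize_apply, coe_normUnit, mul_comm,
      CommGroupWithZero.coe_normUnit K (leadingCoeff_ne_zero.2 hp)]

theorem C_leadingCoeff_mul_normalize (p : K[X]) : C p.leadingCoeff * normalize p = p := by
  rcases eq_or_ne p 0 with rfl | hp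
  · simp
  · rw [normalize_eq_C_leadingCoeff_inv_mul, ← mul_assoc, ← C_mul,
      mul_inv_cancel₀ (leadingCoeff_ne_zero.2 hp), C_1, one_mul]

theorem eq_C_leadingCoeff_mul_iff {p q : K[X]} (hp : p ≠ 0) :
    p = C p.leadingCoeff * q ↔ normalize p = q := by
  conv_lhs => lhs; rw [← C_leadingCoeff_mul_normalize p]
  exact mul_right_inj' (by simpa using hp)

theorem natDegree_normalize (p : K[X]) : (normalize p).natDegree = p.natDegree :=
  natDegree_eq_of_degree_eq degree_normalize

theorem isRoot_normalize {p : K[X]} {x : K} : (normalize p).IsRoot x ↔ p.IsRoot x := by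
  rw [← dvd_iff_isRoot, dvd_normalize_iff, dvd_iff_isRoot]

theorem normalize_eq_add {F f g a b : K[X]} (h : F = a * f + b * g) :
    normalize F = C (f.leadingCoeff / F.leadingCoeff) * a * normalize f +
      C (g.leadingCoeff / F.leadingCoeff) * b * normalize g :=
  calc
    normalize F = C F.leadingCoeff⁻¹ * (a * f + b * g) :=
      (normalize_eq_C_leadingCoeff_inv_mul F).trans (congrArg _ h)
    _ = C F.leadingCoeff⁻¹ * (a * (C f.leadingCoeff * normalize f) +
          b * (C g.leadingCoeff * normalize g)) := by
      rw [C_leadingCoeff_mul_normalize, C_leadingCoeff_mul_normalize]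
    _ = _ := by
      simp only [div_eq_mul_inv, C_mul]
      ring

theorem natDegree_eq_of_normalize_eq_prod {p : K[X]} {n : ℕ} {a : Fin n → K}
    (h : normalize p = ∏ i, (X - C (a i))) : p.natDegree = n := by
  rw [← natDegree_normalize, h, natDegree_finsetProd_X_sub_C_eq_card, Finset.card_univ,
    Fintype.card_fin]

theorem precRel_iff_interleaved_normalize {g f : K[X]} (hf : f ≠ 0) (hg : g ≠ 0) :
    PrecRel R g f ↔ Interleaved R (normalize g) (normalize f) := by
  rw [interleaved_iff, PrecRel]
  simp only [eq_C_leadingCoeff_mul_iff hf, eq_C_leadingCoeff_mul_iff hg, hf, hg, ne_eq,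
    not_false_eq_true, true_and]
  refine or_congr (exists_congr fun n => exists₂_congr fun a b => ?_)
    (exists_congr fun n => exists₂_congr fun a b => ?_)
  all_goals
    exact ⟨fun ⟨_, _, h⟩ => h, fun h =>
      ⟨natDegree_eq_of_normalize_eq_prod h.1, natDegree_eq_of_normalize_eq_prod h.2.1, h⟩⟩

end Field

section Real

theorem precEq_iff_interleaved_normalize {g f : ℝ[X]} (hf : f ≠ 0) (hg : g ≠ 0) :
    PrecEq g f ↔ Interleaved (· ≥ ·) (normalize g) (normalize f) :=
  precRel_iff_interleaved_normalize (R := (· ≥ ·)) hf hg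

theorem prec_iff_interleaved_normalize {g f : ℝ[X]} (hf : f ≠ 0) (hg : g ≠ 0) :
    Prec g f ↔ Interleaved (· > ·) (normalize g) (normalize f) :=
  precRel_iff_interleaved_normalize (R := (· > ·)) hf hg

theorem onlyRealZeros_of_eq_C_mul_prod {p : ℝ[X]} {c : ℝ} {n : ℕ} {a : Fin n → ℝ}
    (h : p = C c * ∏ i, (X - C (a i))) : OnlyRealZeros p := by
  have hsplits : p.Splits := by
    rw [h]
    exact (Splits.C c).mul (Splits.prod fun i _ => Splits.X_sub_C (a i))
  exact hsplits.natDegree_eq_card_roots.symm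

theorem PrecEq.onlyRealZeros {g f : ℝ[X]} (h : PrecEq g f) : OnlyRealZeros f := by
  rcases h with ⟨-, -, n, a, b, -, -, hf, -⟩ | ⟨-, -, n, a, b, -, -, hf, -⟩ <;>
    exact onlyRealZeros_of_eq_C_mul_prod hf

end Real

/-- Liu–Wang Theorem 2.1: let `F = a·f + b·g` with `deg F = deg f` or `deg f + 1`,
`f, g ∈ RZ`, `g ≼ f`, and `F, g` having leading coefficients of the same sign.
If `b(r) ≤ 0` whenever `f(r) = 0`, then `F ∈ RZ` and `f ≼ F`.  Moreover, if
`g ≺ f` and `b(r) < 0` whenever `f(r) = 0`, then `f ≺ F`. -/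
theorem statement6 (F f g a b : Polynomial ℝ)
    (hF : F = a * f + b * g)
    (hdeg : F.natDegree = f.natDegree ∨ F.natDegree = f.natDegree + 1)
    (hfRZ : OnlyRealZeros f) (hgRZ : OnlyRealZeros g)
    (hgf : PrecEq g f)
    (hsign : 0 < F.leadingCoeff * g.leadingCoeff)
    (hb : ∀ r : ℝ, f.eval r = 0 → b.eval r ≤ 0) :
    (OnlyRealZeros F ∧ PrecEq f F) ∧
    ((Prec g f ∧ ∀ r : ℝ, f.eval r = 0 → b.eval r < 0) → Prec f F) := by
  have hF0 : F ≠ 0 := leadingCoeff_ne_zero.1 (left_ne_zero_of_mul hsign.ne')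
  have hg0 : g ≠ 0 := leadingCoeff_ne_zero.1 (right_ne_zero_of_mul hsign.ne')
  have hf0 : f ≠ 0 := hgf.elim And.left And.left
  have hc : 0 < g.leadingCoeff / F.leadingCoeff :=
    div_pos_iff.2 (mul_pos_iff.1 (mul_comm F.leadingCoeff _ ▸ hsign))
  have hdeg' : (normalize F).natDegree ≤ (normalize f).natDegree + 1 := by
    rw [natDegree_normalize, natDegree_normalize]
    lia
  rw [precEq_iff_interleaved_normalize hf0 hg0] at hgf
  rw [prec_iff_interleaved_normalize hf0 hg0, prec_iff_interleaved_normalize hF0 hf0]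
  have hfF : PrecEq f F := by
    refine (precEq_iff_interleaved_normalize hF0 hf0).2
      (hgf.ge_of_eq_add (monic_normalize hF0) hdeg' (normalize_eq_add hF) fun x hx => ?_)
    rw [eval_mul, eval_C]
    exact mul_nonpos_of_nonneg_of_nonpos hc.le (hb x (isRoot_normalize.1 hx))
  refine ⟨⟨hfF.onlyRealZeros, hfF⟩, fun ⟨hlt, hb_neg⟩ =>
    hlt.gt_of_eq_add (monic_normalize hF0) hdeg' (normalize_eq_add hF) fun x hx => ?_⟩
  rw [eval_mul, eval_C]
  exact mul_neg_of_pos_of_neg hc (hb_neg x (isRoot_normalize.1 hx))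
end
end

section
/- For every positive integer n and every complex t with |t| < 1, Li_{−n}(t) = Σ_{j=0}^{n} (−1)^{n+j} j! S(n+1, j+1) / (1−t)^{j+1}, where S(·,·) is the Stirling number of the second kind. -/
/-!
The Stirling numbers of the second kind are the coefficients of `X ^ n` in the basis of falling
factorials, and this one expansion is used twice. Taking `k`-th forward differences at `0` gives
the alternating sum formula for `k! S(n, k)`. Dividing the expansion of `X ^ (n + 1)` by `X` and
evaluating at `-x`, where falling factorials become rising ones, gives
`x ^ n = ∑ j, (-1) ^ (n + j) * j! * S(n + 1, j + 1) * C(x + j, j)`, and the theorem follows by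
summing the series `∑ x, C(x + j, j) * t ^ x = (1 - t)⁻¹ ^ (j + 1)`.
-/

open Polynomial

noncomputable section

/-- The polylogarithm of negative integer order: `Li_{−n}(t) = ∑_{k=1}^∞ k^n t^k`
(the `k = 0` term vanishes for `n ≥ 1`). -/
def fbhLi (n : ℕ) (t : ℂ) : ℂ := ∑' k : ℕ, (k : ℂ) ^ n * t ^ k

/-- The Stirling number of the second kind, given by
`k!·S(n,k) = ∑_{i=0}^{k} (−1)^i C(k,i) (k−i)^n`. -/
def stirlingS2 (n k : ℕ) : ℝ :=
  (∑ i ∈ Finset.range (k + 1), (-1 : ℝ) ^ i * (k.choose i) * ((k - i : ℕ) : ℝ) ^ n) /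
    (Nat.factorial k : ℝ)

open Finset

open scoped Nat Ring

section FallingFactorial

variable (R : Type*) [Ring R]

theorem descPochhammer_mul_X (k : ℕ) :
    descPochhammer R k * X = descPochhammer R (k + 1) + k • descPochhammer R k := by
  rw [descPochhammer_succ_right, mul_sub, nsmul_eq_mul, Nat.cast_comm, sub_add_cancel]

theorem X_pow_eq_sum_stirlingSecond_smul_descPochhammer (n : ℕ) :
    (X : R[X]) ^ n = ∑ k ∈ range (n + 1), Nat.stirlingSecond n k • descPochhammer R k := by
  induction n with
  | zero => simp
  | succ n ih =>
    have shift : ∑ k ∈ range (n + 1), (k * Nat.stirlingSecond n k) • descPochhammer R k =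
        ∑ k ∈ range (n + 1),
          ((k + 1) * Nat.stirlingSecond n (k + 1)) • descPochhammer R (k + 1) := by
      rw [← add_zero (∑ k ∈ range (n + 1), ((k + 1) * _) • _), sum_range_succ',
        sum_range_succ _ n, Nat.stirlingSecond_eq_zero_of_lt n.lt_succ_self]
      simp
    calc (X : R[X]) ^ (n + 1)
      _ = ∑ k ∈ range (n + 1), Nat.stirlingSecond n k • descPochhammer R (k + 1) +
          ∑ k ∈ range (n + 1), (k * Nat.stirlingSecond n k) • descPochhammer R k := by
        simp only [pow_succ, ih, sum_mul, smul_mul_assoc, descPochhammer_mul_X, smul_add,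
          smul_smul, sum_add_distrib, mul_comm]
      _ = ∑ k ∈ range (n + 1), Nat.stirlingSecond (n + 1) (k + 1) • descPochhammer R (k + 1) := by
        simp only [shift, ← sum_add_distrib, ← add_smul, Nat.stirlingSecond_succ_succ, add_comm]
      _ = ∑ k ∈ range (n + 2), Nat.stirlingSecond (n + 1) k • descPochhammer R k := by
        rw [sum_range_succ' _ (n + 1), Nat.stirlingSecond_succ_zero, zero_smul, add_zero]

theorem X_pow_eq_sum_stirlingSecond_succ_smul_descPochhammer_comp (n : ℕ) :
    (X : R[X]) ^ n = ∑ k ∈ range (n + 1),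
      Nat.stirlingSecond (n + 1) (k + 1) • (descPochhammer R k).comp (X - 1) := by
  -- Dividing the expansion of `X ^ (n + 1)` by `X` shifts both Stirling indices.
  refine (isRegular_X (R := R)).left ?_
  change X * X ^ n = X * _
  rw [← pow_succ', X_pow_eq_sum_stirlingSecond_smul_descPochhammer, sum_range_succ',
    Nat.stirlingSecond_succ_zero, zero_smul, add_zero, mul_sum]
  simp only [descPochhammer_succ_left, mul_smul_comm]

end FallingFactorial

theorem pow_eq_sum_stirlingSecond_mul_descFactorial (n x : ℕ) :
    x ^ n = ∑ k ∈ range (n + 1), Nat.stirlingSecond n k * x.descFactorial k := by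
  have h := congrArg (eval (x : ℤ)) (X_pow_eq_sum_stirlingSecond_smul_descPochhammer ℤ n)
  simp only [eval_pow, eval_X, nsmul_eq_mul, eval_finsetSum, eval_natCast_mul,
    descPochhammer_eval_eq_descFactorial] at h
  exact_mod_cast h

theorem fwdDiff_iter_natCast_pow_zero (n k : ℕ) :
    (fwdDiff 1)^[k] (fun x : ℕ ↦ (x : ℤ) ^ n) 0 = k ! * Nat.stirlingSecond n k := by
  have expansion : (fun x : ℕ ↦ (x : ℤ) ^ n) =
      ∑ m ∈ range (n + 1), (Nat.stirlingSecond n m * m ! : ℤ) • fun x : ℕ ↦ (x.choose m : ℤ) := by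
    ext x
    simpa [Nat.descFactorial_eq_factorial_mul_choose, mul_assoc] using
      congrArg (Nat.cast : ℕ → ℤ) (pow_eq_sum_stirlingSecond_mul_descFactorial n x)
  rw [expansion, fwdDiff_iter_finsetSum]
  simp only [fwdDiff_iter_const_smul, Finset.sum_apply, Pi.smul_apply, fwdDiff_iter_choose_zero,
    smul_eq_mul, mul_ite, mul_one, mul_zero, sum_ite_eq, mem_range]
  split_ifs with hk
  · ring
  · rw [Nat.stirlingSecond_eq_zero_of_lt (by lia), Nat.cast_zero, mul_zero]

theorem stirlingS2_eq_stirlingSecond (n k : ℕ) : stirlingS2 n k = Nat.stirlingSecond n k := by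
  have alternating_sum : ∑ i ∈ range (k + 1), (-1 : ℤ) ^ i * k.choose i * ((k - i : ℕ) : ℤ) ^ n =
      k ! * Nat.stirlingSecond n k := by
    rw [← fwdDiff_iter_natCast_pow_zero, fwdDiff_iter_eq_sum_shift, ← sum_range_reflect]
    refine sum_congr rfl fun i hi ↦ ?_
    have hik : i ≤ k := by grind
    simp [Nat.choose_symm hik, Nat.sub_sub_self hik]
  rw [stirlingS2, div_eq_iff (by positivity), mul_comm]
  exact_mod_cast congrArg (Int.cast : ℤ → ℝ) alternating_sum

theorem pow_eq_sum_stirlingSecond_mul_ascPochhammer_eval {R : Type*} [CommRing R] (n : ℕ) (x : R) :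
    x ^ n = ∑ k ∈ range (n + 1), (-1) ^ (n + k) * Nat.stirlingSecond (n + 1) (k + 1) *
      (ascPochhammer R k).eval (x + 1) := by
  have reflect (k : ℕ) : (descPochhammer R k).eval (-x - 1) =
      (-1) ^ k * (ascPochhammer R k).eval (x + 1) := by
    rw [show x + 1 = -(-x - 1) by ring, ascPochhammer_eval_neg_eq_descPochhammer, ← mul_assoc,
      ← mul_pow, neg_one_mul, neg_neg, one_pow, one_mul]
  have h := congrArg (eval (-x)) (X_pow_eq_sum_stirlingSecond_succ_smul_descPochhammer_comp R n)
  simp only [eval_pow, eval_X, nsmul_eq_mul, eval_finsetSum, eval_natCast_mul, eval_comp,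
    eval_sub, eval_one, reflect] at h
  rw [← neg_neg x, neg_pow, h, mul_sum, neg_neg]
  exact sum_congr rfl fun k _ ↦ by ring

theorem natCast_pow_eq_sum_stirlingSecond_mul_add_choose (R : Type*) [Ring R] (n x : ℕ) :
    (x : R) ^ n = ∑ j ∈ range (n + 1),
      (-1 : R) ^ (n + j) * j ! * Nat.stirlingSecond (n + 1) (j + 1) * (x + j).choose j := by
  have int_expansion : (x : ℤ) ^ n = ∑ j ∈ range (n + 1),
      (-1 : ℤ) ^ (n + j) * j ! * Nat.stirlingSecond (n + 1) (j + 1) * (x + j).choose j := by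
    rw [pow_eq_sum_stirlingSecond_mul_ascPochhammer_eval]
    refine sum_congr rfl fun j _ ↦ ?_
    rw [← Nat.cast_succ, ascPochhammer_nat_eq_natCast_ascFactorial,
      Nat.ascFactorial_eq_factorial_mul_choose]
    push_cast
    ring
  exact_mod_cast congrArg (Int.cast : ℤ → R) int_expansion

-- Since `0 ^ 0 = 1`, the `k = 0` term is `1` when `n = 0`.
theorem statement7_general {R : Type*} [NormedRing R] [HasSummableGeomSeries R] (n : ℕ) {t : R}
    (ht : ‖t‖ < 1) :
    HasSum (fun k : ℕ ↦ (k : R) ^ n * t ^ k) (∑ j ∈ range (n + 1),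
      (-1 : R) ^ (n + j) * j ! * Nat.stirlingSecond (n + 1) (j + 1) * (1 - t)⁻¹ʳ ^ (j + 1)) := by
  have expansion (k : ℕ) : (k : R) ^ n * t ^ k = ∑ j ∈ range (n + 1),
      (-1 : R) ^ (n + j) * j ! * Nat.stirlingSecond (n + 1) (j + 1) *
        ((k + j).choose j * t ^ k) := by
    simp only [natCast_pow_eq_sum_stirlingSecond_mul_add_choose R n k, sum_mul, mul_assoc]
  simp only [expansion]
  exact hasSum_sum fun j _ ↦ (hasSum_choose_mul_geometric_of_norm_lt_one' j ht).mul_left _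

/-- For every positive integer `n` and complex `t` with `|t| < 1`,
`Li_{−n}(t) = ∑_{j=0}^{n} (−1)^{n+j} j! S(n+1, j+1) / (1−t)^{j+1}`. -/
theorem statement7 (n : ℕ) (hn : 1 ≤ n) (t : ℂ) (ht : ‖t‖ < 1) :
    fbhLi n t = ∑ j ∈ Finset.range (n + 1),
      (-1 : ℂ) ^ (n + j) * (Nat.factorial j : ℂ) * ((stirlingS2 (n + 1) (j + 1) : ℝ) : ℂ) /
        (1 - t) ^ (j + 1) := by
  simpa [fbhLi, stirlingS2_eq_stirlingSecond, div_eq_mul_inv] using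
    (statement7_general n ht).tsum_eq
end
end

section
/- For all integers n ≥ 1 and m ≥ 1, all coefficients of the degree-n polynomial A_{n,m}(t) (the coefficients of t^0, t^1, …, t^n) are strictly positive. -/
open Polynomial

noncomputable section

/-!
Differentiating `p(t) / (1 - t) ^ k` gives `((1 - t) p'(t) + k p(t)) / (1 - t) ^ (k + 1)`, and the
new numerator has coefficients `(i + 1) a_{i+1} + (k - i) a_i`, where `a_i` are those of `p`. Hence
positivity is preserved as long as `deg p < k`. Together with `Li_{-(n+1)}(t) = t Li_{-n}'(t)` this
yields every numerator `A_{n,m}` from `Li_0(t) = 1 / (1 - t)` (the term `0 ^ 0 * t ^ 0` counts as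
`1`); the factor `t` makes the constant coefficient of `A_{n,0}` vanish, and the first derivative
makes it positive again.
-/

theorem eq_of_infinite_eqOn_aeval {R S : Type*} [CommSemiring R] [CommRing S] [IsDomain S]
    [Algebra R S] [FaithfulSMul R S] {p q : R[X]} {s : Set S} (hs : s.Infinite)
    (h : s.EqOn (fun t => aeval t p) fun t => aeval t q) : p = q := by
  refine map_injective _ (FaithfulSMul.algebraMap_injective R S) ?_
  exact eq_of_infinite_eval_eq _ _ (hs.mono fun t ht => by simpa using h ht)

section DerivNumerator

variable {R : Type*} [CommRing R]

/-- The numerator of the derivative of `p(t) / (1 - t) ^ k`, over the denominator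
`(1 - t) ^ (k + 1)`. -/
def derivNumerator (k : ℕ) (p : R[X]) : R[X] :=
  (1 - X) * derivative p + (k : R[X]) * p

/-- The numerator of the `m`-th derivative of `p(t) / (1 - t) ^ k`, over the denominator
`(1 - t) ^ (k + m)`. -/
def iterDerivNumerator (k : ℕ) (p : R[X]) : ℕ → R[X]
  | 0 => p
  | m + 1 => derivNumerator (k + m) (iterDerivNumerator k p m)

theorem coeff_derivNumerator (k : ℕ) (p : R[X]) (i : ℕ) :
    (derivNumerator k p).coeff i = (i + 1) * p.coeff (i + 1) + (k - i) * p.coeff i := by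
  rw [derivNumerator, coeff_add, coeff_natCast_mul, sub_mul, one_mul, coeff_sub, coeff_derivative]
  cases i with
  | zero => simp
  | succ i =>
    rw [coeff_X_mul, coeff_derivative]
    push_cast
    ring

theorem natDegree_derivNumerator_le (k : ℕ) (p : R[X]) :
    (derivNumerator k p).natDegree ≤ p.natDegree := by
  refine natDegree_le_iff_coeff_eq_zero.2 fun i hi => ?_
  rw [coeff_derivNumerator, coeff_eq_zero_of_natDegree_lt hi,
    coeff_eq_zero_of_natDegree_lt (hi.trans i.lt_succ_self), mul_zero, mul_zero, add_zero]

variable {𝕜 : Type*} [NontriviallyNormedField 𝕜] [Algebra R 𝕜]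

theorem hasDerivAt_aeval_div_one_sub_pow (p : R[X]) (k : ℕ) {t : 𝕜} (ht : t ≠ 1) :
    HasDerivAt (fun z : 𝕜 => aeval z p / (1 - z) ^ k)
      (aeval t (derivNumerator k p) / (1 - t) ^ (k + 1)) t := by
  have hne : 1 - t ≠ 0 := sub_ne_zero.2 ht.symm
  have hpow : HasDerivAt (fun z : 𝕜 => (1 - z) ^ k) (k * (1 - t) ^ (k - 1) * (-1)) t :=
    ((hasDerivAt_id t).const_sub 1).pow k
  refine ((p.hasDerivAt_aeval t).div hpow (pow_ne_zero k hne)).congr_deriv ?_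
  simp only [derivNumerator, map_add, map_mul, map_sub, map_one, aeval_X, map_natCast]
  cases k with
  | zero => field_simp; simp
  | succ k =>
    rw [Nat.add_sub_cancel]
    field_simp
    ring

theorem eqOn_iteratedDeriv_of_eqOn_aeval_div {f : 𝕜 → 𝕜} {s : Set 𝕜} (hs : IsOpen s)
    (hs1 : 1 ∉ s) {p : R[X]} {k : ℕ} (hf : s.EqOn f fun t => aeval t p / (1 - t) ^ k) (m : ℕ) :
    s.EqOn (iteratedDeriv m f) fun t => aeval t (iterDerivNumerator k p m) / (1 - t) ^ (k + m) := by
  induction m with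
  | zero => rwa [iteratedDeriv_zero]
  | succ m ih =>
    intro t ht
    rw [iteratedDeriv_succ, ih.deriv hs ht]
    exact (hasDerivAt_aeval_div_one_sub_pow _ _ (ne_of_mem_of_not_mem ht hs1)).deriv

end DerivNumerator

section PositiveCoefficients

/-- `p` has degree `n` and its coefficients of `X ^ 0, …, X ^ n` are all strictly positive;
the field `natDegree_le` is an inequality because `0 < p.coeff n` gives the other one. -/
structure HasPosCoeffs {R : Type*} [Semiring R] [PartialOrder R] (p : R[X]) (n : ℕ) : Prop where
  natDegree_le : p.natDegree ≤ n
  coeff_pos : ∀ i ≤ n, 0 < p.coeff i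

theorem HasPosCoeffs.coeff_nonneg {R : Type*} [Semiring R] [PartialOrder R] {p : R[X]} {n : ℕ}
    (hp : HasPosCoeffs p n) (i : ℕ) : 0 ≤ p.coeff i := by
  rcases le_or_gt i n with hi | hi
  · exact (hp.coeff_pos i hi).le
  · exact (coeff_eq_zero_of_natDegree_lt (hp.natDegree_le.trans_lt hi)).ge

variable {R : Type*} [CommRing R] [PartialOrder R] [IsStrictOrderedRing R] {p : R[X]} {n k : ℕ}

theorem hasPosCoeffs_one : HasPosCoeffs (1 : R[X]) 0 where
  natDegree_le := natDegree_one.le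
  coeff_pos i hi := by
    rw [Nat.le_zero.1 hi, coeff_one_zero]
    exact one_pos

theorem hasPosCoeffs_derivNumerator (hp : HasPosCoeffs p n) (hk : n < k) :
    HasPosCoeffs (derivNumerator k p) n where
  natDegree_le := (natDegree_derivNumerator_le k p).trans hp.natDegree_le
  coeff_pos i hi := by
    have hki : (0 : R) < k - i := sub_pos.2 (Nat.cast_lt.2 (hi.trans_lt hk))
    rw [coeff_derivNumerator]
    exact add_pos_of_nonneg_of_pos (mul_nonneg (by positivity) (hp.coeff_nonneg _))
      (mul_pos hki (hp.coeff_pos i hi))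

theorem hasPosCoeffs_derivNumerator_X_mul (hp : HasPosCoeffs p n) (hk : n + 1 < k) :
    HasPosCoeffs (derivNumerator k (X * p)) (n + 1) where
  natDegree_le := (natDegree_derivNumerator_le k _).trans <|
    (natDegree_mul_le_of_le natDegree_X_le hp.natDegree_le).trans_eq (Nat.add_comm 1 n)
  coeff_pos i hi := by
    rw [coeff_derivNumerator, coeff_X_mul]
    cases i with
    | zero => simpa using hp.coeff_pos 0 n.zero_le
    | succ i =>
      have hki : (0 : R) < k - (i + 1 : ℕ) := sub_pos.2 (Nat.cast_lt.2 (hi.trans_lt hk))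
      rw [coeff_X_mul]
      exact add_pos_of_nonneg_of_pos (mul_nonneg (by positivity) (hp.coeff_nonneg _))
        (mul_pos hki (hp.coeff_pos i (Nat.le_of_succ_le_succ hi)))

theorem hasPosCoeffs_iterDerivNumerator (hp : HasPosCoeffs (derivNumerator k p) n) (hk : n ≤ k)
    {m : ℕ} (hm : 1 ≤ m) : HasPosCoeffs (iterDerivNumerator k p m) n := by
  induction m, hm using Nat.le_induction with
  | base => exact hp
  | succ m hm ih => exact hasPosCoeffs_derivNumerator ih (by lia)

end PositiveCoefficients

section EulerianPolynomial

/-- The Eulerian polynomial `E_n`, normalised by `∑_{k ≥ 0} k^n t^k = E_n(t) / (1 - t)^(n + 1)`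
with `0^0 = 1`; thus `E_0 = 1` and `E_n` is divisible by `X` for `n ≥ 1`. -/
def eulerianPolynomial (R : Type*) [CommRing R] : ℕ → R[X]
  | 0 => 1
  | n + 1 => X * derivNumerator (n + 1) (eulerianPolynomial R n)

theorem hasPosCoeffs_derivNumerator_eulerianPolynomial (R : Type*) [CommRing R] [PartialOrder R]
    [IsStrictOrderedRing R] (n : ℕ) :
    HasPosCoeffs (derivNumerator (n + 1) (eulerianPolynomial R n)) n := by
  induction n with
  | zero => exact hasPosCoeffs_derivNumerator hasPosCoeffs_one Nat.zero_lt_one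
  | succ n ih => exact hasPosCoeffs_derivNumerator_X_mul ih (n + 1).lt_succ_self

theorem fbhLi_succ (n : ℕ) {t : ℂ} (ht : ‖t‖ < 1) :
    fbhLi (n + 1) t = t * deriv (fbhLi n) t := by
  obtain ⟨r, htr, hr⟩ := exists_between ht
  have hr0 : 0 ≤ r := (norm_nonneg t).trans htr.le
  have hsum : Summable fun k : ℕ => (k : ℝ) ^ n * r ^ k :=
    summable_pow_mul_geometric_of_norm_lt_one n (by rwa [Real.norm_of_nonneg hr0])
  have hbound (k : ℕ) (z : ℂ) (hz : z ∈ Metric.ball 0 r) :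
      ‖(k : ℂ) ^ n * z ^ k‖ ≤ (k : ℝ) ^ n * r ^ k := by
    have hzr : ‖z‖ ≤ r := (mem_ball_zero_iff.1 hz).le
    rw [norm_mul, norm_pow, norm_pow, Complex.norm_natCast]
    gcongr
  have hderiv : HasSum (fun k : ℕ => deriv (fun z : ℂ => (k : ℂ) ^ n * z ^ k) t)
      (deriv (fbhLi n) t) :=
    Complex.hasSum_deriv_of_summable_norm hsum (fun k => by fun_prop) Metric.isOpen_ball hbound
      (mem_ball_zero_iff.2 htr)
  rw [← (hderiv.mul_left t).tsum_eq, fbhLi]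
  refine tsum_congr fun k => ?_
  rw [deriv_const_mul_field, deriv_pow_field]
  cases k with
  | zero => simp
  | succ k =>
    rw [Nat.add_sub_cancel]
    ring

theorem eqOn_fbhLi_eulerianPolynomial (n : ℕ) :
    (Metric.ball 0 1).EqOn (fbhLi n)
      fun t => aeval t (eulerianPolynomial ℝ n) / (1 - t) ^ (n + 1) := by
  induction n with
  | zero =>
    intro t ht
    simp [fbhLi, eulerianPolynomial, tsum_geometric_of_norm_lt_one (mem_ball_zero_iff.1 ht)]
  | succ n ih =>
    intro t ht
    have ht1 : t ≠ 1 := ne_of_mem_of_not_mem ht (by simp)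
    rw [fbhLi_succ n (mem_ball_zero_iff.1 ht), ih.deriv Metric.isOpen_ball ht,
      (hasDerivAt_aeval_div_one_sub_pow _ _ ht1).deriv]
    simp only [eulerianPolynomial, map_mul, aeval_X, mul_div_assoc]

end EulerianPolynomial

/-- For `n, m ≥ 1`, all coefficients (of `t^0, …, t^n`) of the degree-`n` polynomial
`A_{n,m}`, characterized by `(d^m/dt^m) Li_{−n}(t) = A_{n,m}(t)/(1−t)^{n+m+1}` on the
unit disk, are strictly positive. -/
theorem statement10 (n m : ℕ) (hn : 1 ≤ n) (hm : 1 ≤ m) (A : Polynomial ℝ)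
    (hdeg : A.natDegree = n)
    (hA : ∀ t : ℂ, ‖t‖ < 1 →
      iteratedDeriv m (fbhLi n) t = Polynomial.aeval t A / (1 - t) ^ (n + m + 1)) :
    ∀ i ≤ n, 0 < A.coeff i := by
  have hone : (1 : ℂ) ∉ Metric.ball (0 : ℂ) 1 := by simp
  have hball : (Metric.ball (0 : ℂ) 1).Infinite :=
    infinite_of_mem_nhds 0 (Metric.ball_mem_nhds 0 one_pos)
  have hderiv := eqOn_iteratedDeriv_of_eqOn_aeval_div Metric.isOpen_ball hone
    (eqOn_fbhLi_eulerianPolynomial n) m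
  have hA_eq : A = iterDerivNumerator (n + 1) (eulerianPolynomial ℝ n) m := by
    refine eq_of_infinite_eqOn_aeval hball fun t ht => ?_
    have hpow : (1 - t) ^ (n + m + 1) ≠ 0 :=
      pow_ne_zero _ (sub_ne_zero.2 (ne_of_mem_of_not_mem ht hone).symm)
    have hquot := (hA t (mem_ball_zero_iff.1 ht)).symm.trans (hderiv ht)
    rwa [Nat.add_right_comm n 1 m, div_left_inj' hpow] at hquot
  rw [hA_eq]
  exact (hasPosCoeffs_iterDerivNumerator (hasPosCoeffs_derivNumerator_eulerianPolynomial ℝ n)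
    n.le_succ hm).coeff_pos
end
end

section
/- Let p(t) = a_n t^n + ⋯ + a_1 t + a_0 be a polynomial with a_k > 0 for every k = 0, …, n and n ≥ 1. Then every complex zero t of p satisfies min_{0 ≤ i ≤ n−1}(a_i/a_{i+1}) ≤ |t| ≤ max_{0 ≤ i ≤ n−1}(a_i/a_{i+1}). -/
/-!
If all coefficients of a real polynomial `q` but one are nonnegative, then moving the remaining
monomial to the other side of `q(t) = 0` and taking norms gives `0 ≤ q(‖t‖)`. When `p` has positive
coefficients `a_i`, the coefficients of `(X - M) p` are `-M a_0`, `a_i - M a_{i+1}` and `a_n`.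
For `M = min a_i / a_{i+1}` only the constant one is negative, so `0 ≤ (‖t‖ - M) p(‖t‖)`; for
`M = max a_i / a_{i+1}` the same holds of the leading one in `-(X - M) p`, so
`0 ≤ (M - ‖t‖) p(‖t‖)`. Since `p(‖t‖) > 0`, both bounds follow.
-/

open Polynomial

noncomputable section

section NonnegCoeff

variable {p : ℝ[X]}

theorem eval_pos_of_coeff_nonneg (hp : ∀ i, 0 ≤ p.coeff i) {r : ℝ} (hr : 0 ≤ r) {k : ℕ}
    (hk : 0 < p.coeff k * r ^ k) : 0 < p.eval r := by
  have hk_mem : k ∈ p.support := mem_support_iff.mpr (left_ne_zero_of_mul hk.ne')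
  rw [eval_eq_sum, sum_def]
  exact Finset.sum_pos' (fun i _ => mul_nonneg (hp i) (pow_nonneg hr i)) ⟨k, hk_mem, hk⟩

variable {A : Type*} [NormedRing A] [NormOneClass A] [NormedAlgebra ℝ A]

theorem norm_aeval_le_eval_norm (hp : ∀ i, 0 ≤ p.coeff i) (t : A) :
    ‖aeval t p‖ ≤ p.eval ‖t‖ := by
  rw [aeval_eq_sum_range, eval_eq_sum_range]
  refine norm_sum_le_of_le _ fun i _ => ?_
  rw [norm_smul, Real.norm_of_nonneg (hp i)]
  exact mul_le_mul_of_nonneg_left (norm_pow_le t i) (hp i)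

variable {t : A}

theorem eval_norm_nonneg_of_aeval_eq_zero {m : ℕ} (hp : ∀ i ≠ m, 0 ≤ p.coeff i)
    (htm : ‖t ^ m‖ = ‖t‖ ^ m) (ht : aeval t p = 0) : 0 ≤ p.eval ‖t‖ := by
  have herase : ∀ i, 0 ≤ (p.erase m).coeff i := fun i => by
    rw [coeff_erase]
    split_ifs with him
    exacts [le_rfl, hp i him]
  have hsplit : p.coeff m • t ^ m + aeval t (p.erase m) = 0 := by
    rw [← ht, Algebra.smul_def, ← aeval_monomial, ← map_add, monomial_add_erase]
  calc
    0 ≤ p.coeff m * ‖t‖ ^ m + |p.coeff m| * ‖t‖ ^ m := by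
      rw [← add_mul]
      exact mul_nonneg (by linarith [neg_abs_le (p.coeff m)]) (by positivity)
    _ = p.coeff m * ‖t‖ ^ m + ‖aeval t (p.erase m)‖ := by
      rw [← norm_neg (aeval t _), ← eq_neg_of_add_eq_zero_left hsplit, norm_smul, htm,
        Real.norm_eq_abs]
    _ ≤ p.coeff m * ‖t‖ ^ m + (p.erase m).eval ‖t‖ := by
      gcongr
      exact norm_aeval_le_eval_norm herase t
    _ = p.eval ‖t‖ := by rw [← eval_monomial, ← eval_add, monomial_add_erase]

theorem le_norm_of_aeval_eq_zero (hp : ∀ i, 0 ≤ p.coeff i) (hp0 : 0 < p.coeff 0) {M : ℝ}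
    (hM : ∀ i < p.natDegree, p.coeff (i + 1) * M ≤ p.coeff i) (ht : aeval t p = 0) :
    M ≤ ‖t‖ := by
  have hcoeff : ∀ i ≠ 0, 0 ≤ (p * (X - C M)).coeff i := by
    rintro (_ | i) hi
    · contradiction
    rw [coeff_mul_X_sub_C, sub_nonneg]
    rcases lt_or_ge i p.natDegree with hlt | hge
    · exact hM i hlt
    · simpa [coeff_eq_zero_of_natDegree_lt (Nat.lt_succ_of_le hge)] using hp i
  have heval : 0 ≤ (p * (X - C M)).eval ‖t‖ :=
    eval_norm_nonneg_of_aeval_eq_zero hcoeff (by simp) (by simp [ht])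
  have hpos : 0 < p.eval ‖t‖ :=
    eval_pos_of_coeff_nonneg hp (norm_nonneg t) (k := 0) (by simpa using hp0)
  rw [eval_mul, eval_sub, eval_X, eval_C] at heval
  exact sub_nonneg.mp (nonneg_of_mul_nonneg_right heval hpos)

theorem norm_le_of_aeval_eq_zero [NormMulClass A] (hp : ∀ i, 0 ≤ p.coeff i) (hp_ne : p ≠ 0)
    {M : ℝ} (hM0 : 0 ≤ M) (hM : ∀ i < p.natDegree, p.coeff i ≤ p.coeff (i + 1) * M)
    (ht : aeval t p = 0) : ‖t‖ ≤ M := by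
  by_contra! hMt
  have hcoeff : ∀ i ≠ p.natDegree + 1, 0 ≤ (-(p * (X - C M))).coeff i := by
    rintro (_ | i) hi
    · simpa using mul_nonneg (hp 0) hM0
    rw [coeff_neg, coeff_mul_X_sub_C, neg_sub, sub_nonneg]
    rcases lt_or_ge i p.natDegree with hlt | hge
    · exact hM i hlt
    · rw [coeff_eq_zero_of_natDegree_lt (show p.natDegree < i by omega)]
      exact mul_nonneg (hp _) hM0
  have heval : 0 ≤ (-(p * (X - C M))).eval ‖t‖ :=
    eval_norm_nonneg_of_aeval_eq_zero hcoeff (norm_pow t _) (by simp [ht])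
  have hlead : 0 < p.leadingCoeff := (hp _).lt_of_ne' (leadingCoeff_ne_zero.mpr hp_ne)
  have hpos : 0 < p.eval ‖t‖ :=
    eval_pos_of_coeff_nonneg hp (norm_nonneg t) (mul_pos hlead (pow_pos (hM0.trans_lt hMt) _))
  rw [eval_neg, eval_mul, eval_sub, eval_X, eval_C] at heval
  linarith [mul_pos hpos (sub_pos.mpr hMt)]

end NonnegCoeff

theorem statement11_general {A : Type*} [NormedRing A] [NormOneClass A] [NormMulClass A]
    [NormedAlgebra ℝ A] (p : Polynomial ℝ) (hn : 1 ≤ p.natDegree)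
    (hpos : ∀ i ≤ p.natDegree, 0 < p.coeff i) (t : A) (ht : Polynomial.aeval t p = 0) :
    (Finset.range p.natDegree).inf' ⟨0, Finset.mem_range.mpr hn⟩
        (fun i => p.coeff i / p.coeff (i + 1)) ≤ ‖t‖ ∧
      ‖t‖ ≤ (Finset.range p.natDegree).sup' ⟨0, Finset.mem_range.mpr hn⟩
        (fun i => p.coeff i / p.coeff (i + 1)) := by
  have hnonneg : ∀ i, 0 ≤ p.coeff i := fun i => by
    rcases le_or_gt i p.natDegree with hle | hgt
    exacts [(hpos i hle).le, (coeff_eq_zero_of_natDegree_lt hgt).ge]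
  constructor
  · refine le_norm_of_aeval_eq_zero hnonneg (hpos 0 (Nat.zero_le _)) (fun i hi => ?_) ht
    rw [← le_div_iff₀' (hpos (i + 1) hi)]
    exact Finset.inf'_le (fun i => p.coeff i / p.coeff (i + 1)) (Finset.mem_range.mpr hi)
  · have hratio_le {i : ℕ} (hi : i < p.natDegree) :=
      Finset.le_sup' (fun i => p.coeff i / p.coeff (i + 1)) (Finset.mem_range.mpr hi)
    refine norm_le_of_aeval_eq_zero hnonneg (ne_zero_of_natDegree_gt hn) ?_ (fun i hi => ?_) ht
    · exact (div_nonneg (hnonneg 0) (hnonneg 1)).trans (hratio_le hn)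
    · exact (div_le_iff₀' (hpos (i + 1) hi)).mp (hratio_le hi)

/-- If `p(t) = a_n t^n + ⋯ + a_0` is a real polynomial of degree `n ≥ 1` with all
coefficients `a_0, …, a_n` strictly positive, then every complex zero `t` of `p`
satisfies `min_{0 ≤ i < n} (a_i/a_{i+1}) ≤ |t| ≤ max_{0 ≤ i < n} (a_i/a_{i+1})`. -/
theorem statement11 (p : Polynomial ℝ) (hn : 1 ≤ p.natDegree)
    (hpos : ∀ i ≤ p.natDegree, 0 < p.coeff i)
    (t : ℂ) (ht : Polynomial.aeval t p = 0) :
    (Finset.range p.natDegree).inf' (Finset.nonempty_range_iff.mpr (by omega))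
        (fun i => p.coeff i / p.coeff (i + 1)) ≤ ‖t‖ ∧
      ‖t‖ ≤ (Finset.range p.natDegree).sup' (Finset.nonempty_range_iff.mpr (by omega))
        (fun i => p.coeff i / p.coeff (i + 1)) :=
  statement11_general p hn hpos t ht
end
end

section
/- For all integers n ≥ 1 and m ≥ 1, the identity A_{n+1,m}(t) = t·A_{n,m+1}(t) + m(1−t)·A_{n,m}(t) holds as polynomials. -/
/-!
The Euler operator `f ↦ t f'` multiplies the `k`-th coefficient of a power series by `k`, so it
sends `Li_{-n}` to `Li_{-(n+1)}`. As `t` has vanishing second derivative, Leibniz' rule gives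
`Li_{-(n+1)}^(m) = (t Li_{-n}')^(m) = t Li_{-n}^(m+1) + m Li_{-n}^(m)` on the unit disk.
Multiplying by `(1 - t) ^ (n + m + 2)` yields the asserted identity at every point of the disk,
hence as polynomials.
-/

open Polynomial

noncomputable section

section EulerOperator

theorem iteratedDeriv_id_smul_deriv {𝕜 F : Type*} [NontriviallyNormedField 𝕜]
    [NormedAddCommGroup F] [NormedSpace 𝕜 F] {f : 𝕜 → F} {x : 𝕜} (m : ℕ)
    (hf : ContDiffAt 𝕜 m (deriv f) x) :
    iteratedDeriv m ((id : 𝕜 → 𝕜) • deriv f) x =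
      x • iteratedDeriv (m + 1) f x + m • iteratedDeriv m f x := by
  have leibniz := iteratedDerivWithin_smul (Set.mem_univ x) uniqueDiffOn_univ
    contDiffWithinAt_id hf.contDiffWithinAt
  simp only [iteratedDerivWithin_univ, iteratedDeriv_id, ← iteratedDeriv_succ'] at leibniz
  rw [leibniz]
  cases m with
  | zero => simp
  | succ m =>
    rw [Finset.sum_range_succ', Finset.sum_range_succ']
    simp [add_comm]

theorem norm_mul_pow_le {𝕜 : Type*} [NormedDivisionRing 𝕜] (c : 𝕜) {z : 𝕜} {r : ℝ}
    (hz : ‖z‖ ≤ r) (k : ℕ) : ‖c * z ^ k‖ ≤ ‖c‖ * r ^ k := by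
  rw [norm_mul, norm_pow]
  gcongr

variable {a : ℕ → ℂ} {r : ℝ}

theorem differentiableOn_tsum_coeff_mul_pow (ha : Summable fun k ↦ ‖a k‖ * r ^ k) :
    DifferentiableOn ℂ (fun z ↦ ∑' k, a k * z ^ k) (Metric.ball 0 r) :=
  Complex.differentiableOn_tsum_of_summable_norm ha (fun _ ↦ by fun_prop) Metric.isOpen_ball
    fun k _ hz ↦ norm_mul_pow_le (a k) (mem_ball_zero_iff.mp hz).le k

theorem hasSum_id_mul_deriv_tsum_coeff_mul_pow (ha : Summable fun k ↦ ‖a k‖ * r ^ k) {z : ℂ}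
    (hz : z ∈ Metric.ball 0 r) :
    HasSum (fun k : ℕ ↦ k * a k * z ^ k) (z * deriv (fun w ↦ ∑' k, a k * w ^ k) z) := by
  have hderiv := Complex.hasSum_deriv_of_summable_norm ha (F := fun k w ↦ a k * w ^ k)
    (fun _ ↦ by fun_prop) Metric.isOpen_ball
    (fun k _ hw ↦ norm_mul_pow_le (a k) (mem_ball_zero_iff.mp hw).le k) hz
  have hterm (k : ℕ) : z * deriv (fun w ↦ a k * w ^ k) z = k * a k * z ^ k := by
    rw [deriv_const_mul_field, deriv_pow_field]
    cases k with
    | zero => simp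
    | succ k => rw [Nat.add_sub_cancel]; ring
  simpa only [hterm] using hderiv.mul_left z

end EulerOperator

section Polylogarithm

theorem exists_mem_ball_summable_norm_natCast_pow (n : ℕ) {t : ℂ} (ht : ‖t‖ < 1) :
    ∃ r, t ∈ Metric.ball 0 r ∧ Summable fun k : ℕ ↦ ‖(k : ℂ) ^ n‖ * r ^ k := by
  obtain ⟨r, htr, hr⟩ := exists_between ht
  have hr_norm : ‖r‖ < 1 := by rwa [Real.norm_of_nonneg ((norm_nonneg t).trans htr.le)]
  refine ⟨r, mem_ball_zero_iff.mpr htr, ?_⟩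
  simpa only [norm_pow, Complex.norm_natCast] using
    summable_pow_mul_geometric_of_norm_lt_one n hr_norm

theorem analyticOnNhd_fbhLi (n : ℕ) : AnalyticOnNhd ℂ (fbhLi n) (Metric.ball 0 1) := by
  intro t ht
  obtain ⟨r, htr, hsum⟩ := exists_mem_ball_summable_norm_natCast_pow n (mem_ball_zero_iff.mp ht)
  exact (differentiableOn_tsum_coeff_mul_pow hsum).analyticAt (Metric.isOpen_ball.mem_nhds htr)

theorem iteratedDeriv_fbhLi_succ (n m : ℕ) {t : ℂ} (ht : ‖t‖ < 1) :
    iteratedDeriv m (fbhLi (n + 1)) t =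
      t * iteratedDeriv (m + 1) (fbhLi n) t + m * iteratedDeriv m (fbhLi n) t := by
  have ht_mem : t ∈ Metric.ball (0 : ℂ) 1 := mem_ball_zero_iff.mpr ht
  have euler : Set.EqOn (fbhLi (n + 1)) ((id : ℂ → ℂ) • deriv (fbhLi n)) (Metric.ball 0 1) :=
    fun _ hz ↦ fbhLi_succ n (mem_ball_zero_iff.mp hz)
  rw [euler.iteratedDeriv_of_isOpen Metric.isOpen_ball m ht_mem, ← smul_eq_mul, ← nsmul_eq_mul]
  exact iteratedDeriv_id_smul_deriv m (analyticOnNhd_fbhLi n t ht_mem).deriv.contDiffAt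

end Polylogarithm

section Numerators

theorem eq_of_infinite_aeval_eq {K A : Type*} [CommSemiring K] [CommRing A] [IsDomain A]
    [Algebra K A] [FaithfulSMul K A] {p q : K[X]}
    (h : {x : A | aeval x p = aeval x q}.Infinite) : p = q := by
  apply map_injective _ (FaithfulSMul.algebraMap_injective K A)
  apply eq_of_infinite_eval_eq
  simpa only [eval_map_algebraMap] using h

theorem eq_of_eventually_aeval_eq {K 𝕜 : Type*} [CommSemiring K] [NontriviallyNormedField 𝕜]
    [Algebra K 𝕜] [FaithfulSMul K 𝕜] {p q : K[X]} {x : 𝕜}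
    (h : ∀ᶠ t in nhds x, aeval t p = aeval t q) : p = q :=
  eq_of_infinite_aeval_eq (infinite_of_mem_nhds x h)

theorem statement14_general {K : Type*} [CommRing K] [Algebra K ℂ] [FaithfulSMul K ℂ] (n m : ℕ)
    (P Q R : K[X])
    (hP : ∀ t : ℂ, ‖t‖ < 1 →
      iteratedDeriv m (fbhLi n) t = aeval t P / (1 - t) ^ (n + m + 1))
    (hQ : ∀ t : ℂ, ‖t‖ < 1 →
      iteratedDeriv (m + 1) (fbhLi n) t = aeval t Q / (1 - t) ^ (n + (m + 1) + 1))
    (hR : ∀ t : ℂ, ‖t‖ < 1 →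
      iteratedDeriv m (fbhLi (n + 1)) t = aeval t R / (1 - t) ^ ((n + 1) + m + 1)) :
    R = X * Q + C (m : K) * (1 - X) * P := by
  suffices ∀ t : ℂ, ‖t‖ < 1 → aeval t R = aeval t (X * Q + C (m : K) * (1 - X) * P) from
    eq_of_eventually_aeval_eq <| Filter.mem_of_superset (Metric.ball_mem_nhds (0 : ℂ) one_pos)
      fun t ht ↦ this t (mem_ball_zero_iff.mp ht)
  intro t ht
  have hne : 1 - t ≠ 0 := sub_ne_zero.mpr fun h ↦ by simp [← h] at ht
  have hrec := iteratedDeriv_fbhLi_succ n m ht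
  rw [hP t ht, hQ t ht, hR t ht, show n + (m + 1) + 1 = n + m + 1 + 1 by ring,
    show n + 1 + m + 1 = n + m + 1 + 1 by ring, pow_succ] at hrec
  field_simp at hrec
  simp only [map_add, map_mul, map_sub, map_one, aeval_X, map_natCast]
  linear_combination hrec

end Numerators

/-- For `n, m ≥ 1`, the polynomials `A_{n,m}` (characterized as the degree-`n` real
polynomials with `(d^m/dt^m) Li_{−n}(t) = A_{n,m}(t)/(1−t)^{n+m+1}` on the unit disk)
satisfy the polynomial identity `A_{n+1,m}(t) = t·A_{n,m+1}(t) + m(1−t)·A_{n,m}(t)`. -/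
theorem statement14 (n m : ℕ) (hn : 1 ≤ n) (hm : 1 ≤ m) (P Q R : Polynomial ℝ)
    (hPdeg : P.natDegree = n) (hQdeg : Q.natDegree = n) (hRdeg : R.natDegree = n + 1)
    (hP : ∀ t : ℂ, ‖t‖ < 1 →
      iteratedDeriv m (fbhLi n) t = Polynomial.aeval t P / (1 - t) ^ (n + m + 1))
    (hQ : ∀ t : ℂ, ‖t‖ < 1 →
      iteratedDeriv (m + 1) (fbhLi n) t = Polynomial.aeval t Q / (1 - t) ^ (n + (m + 1) + 1))
    (hR : ∀ t : ℂ, ‖t‖ < 1 →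
      iteratedDeriv m (fbhLi (n + 1)) t = Polynomial.aeval t R / (1 - t) ^ ((n + 1) + m + 1)) :
    R = X * Q + C (m : ℝ) * (1 - X) * P := by
  exact statement14_general n m P Q R hP hQ hR
end
end
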